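/- Uniform allocation dominates: Fix k ≥ 1, a demand-to-supply ratio β > 0 and M ≥ max{1, 1/β}. Given a service-range vector r ∈ [0, M]^n, let r̄ = (r̄, …, r̄) be the uniform allocation with r̄ = ‖r‖₁/n. There exist a constant C > 0 depending only on β, M (and k) and an integer N such that for all n ≥ N with m = βn: if ‖r − r̄‖₁ > θn where θ > C·(log n / n)^{1/3} in the case k = 1, or θ > C·n^{−1/(4(k+1))} in the case k ≥ 2, then μ_m(r̄) > μ_m(r). -/

import Mathlib

open MeasureTheory
open scoped Classical

noncomputable section

/-- A matching of a bipartite compatibility relation, given as a finite set of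
supply-demand pairs with compatible endpoints and pairwise distinct coordinates. -/
def IsBipMatching {a b : ℕ} (adj : Fin a → Fin b → Prop) (M : Finset (Fin a × Fin b)) : Prop :=
  (∀ e ∈ M, adj e.1 e.2) ∧
    ∀ e ∈ M, ∀ e' ∈ M, e ≠ e' → e.1 ≠ e'.1 ∧ e.2 ≠ e'.2

/-- The maximum cardinality of a matching of the bipartite compatibility relation. -/
def matchingNumber {a b : ℕ} (adj : Fin a → Fin b → Prop) : ℕ :=
  sSup {c | ∃ M : Finset (Fin a × Fin b), IsBipMatching adj M ∧ M.card = c}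

/-- The uniform measure on the unit cube `[0,1]^k`. -/
def unifCube (k : ℕ) : Measure (EuclideanSpace ℝ (Fin k)) :=
  volume.restrict {x | ∀ i, x i ∈ Set.Icc (0 : ℝ) 1}

/-- Compatibility: supply node `i` can serve demand node `j` iff the demand location is
within distance `(r i / n)^(1/k)` of the supply location. -/
def adjOf (k ntot : ℕ) {a b : ℕ} (S : Fin a → EuclideanSpace ℝ (Fin k)) (r : Fin a → ℝ)
    (D : Fin b → EuclideanSpace ℝ (Fin k)) (i : Fin a) (j : Fin b) : Prop :=
  dist (S i) (D j) ≤ (r i / (ntot : ℝ)) ^ ((1 : ℝ) / (k : ℝ))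

/-- Expected maximum matching size, with supply and demand locations i.i.d. uniform
on the unit cube `[0,1]^k`. -/
def muU (k ntot m : ℕ) {a : ℕ} (r : Fin a → ℝ) : ℝ :=
  ∫ S : Fin a → EuclideanSpace ℝ (Fin k),
    ∫ D : Fin m → EuclideanSpace ℝ (Fin k),
      (matchingNumber (fun i j => adjOf k ntot S r D i j) : ℝ)
        ∂(Measure.pi fun _ => unifCube k) ∂(Measure.pi fun _ => unifCube k)

/-- The non-increasing rearrangement of a finite real vector. -/
def descSort {n : ℕ} (x : Fin n → ℝ) : Fin n → ℝ :=
  x ∘ Tuple.sort (fun i => -x i)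

/-- `x` majorizes `y`. -/
def Majorizes {n : ℕ} (x y : Fin n → ℝ) : Prop :=
  (∀ ℓ : ℕ,
      ∑ i ∈ Finset.univ.filter (fun i : Fin n => (i : ℕ) < ℓ), descSort y i ≤
        ∑ i ∈ Finset.univ.filter (fun i : Fin n => (i : ℕ) < ℓ), descSort x i) ∧
    ∑ i, x i = ∑ i, y i


section

section comb
variable {a b : ℕ}

lemma mn_bdd (adj : Fin a → Fin b → Prop) :
    BddAbove {c | ∃ M : Finset (Fin a × Fin b), IsBipMatching adj M ∧ M.card = c} := by
  refine ⟨(Finset.univ : Finset (Fin a × Fin b)).card, ?_⟩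
  rintro c ⟨M, -, rfl⟩
  exact Finset.card_le_card (Finset.subset_univ _)

lemma card_le_mn {adj : Fin a → Fin b → Prop} {M : Finset (Fin a × Fin b)}
    (h : IsBipMatching adj M) : M.card ≤ matchingNumber adj :=
  le_csSup (mn_bdd adj) ⟨M, h, rfl⟩

lemma exists_mn (adj : Fin a → Fin b → Prop) :
    ∃ M : Finset (Fin a × Fin b), IsBipMatching adj M ∧ M.card = matchingNumber adj := by
  have := Nat.sSup_mem (s := {c | ∃ M : Finset (Fin a × Fin b), IsBipMatching adj M ∧ M.card = c})
    ⟨0, ∅, by simp [IsBipMatching], rfl⟩ (mn_bdd adj)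
  exact this

lemma mn_mono {adj adj' : Fin a → Fin b → Prop} (h : ∀ i j, adj i j → adj' i j) :
    matchingNumber adj ≤ matchingNumber adj' := by
  obtain ⟨M, hM, hc⟩ := exists_mn adj
  rw [← hc]
  exact card_le_mn ⟨fun e he => h _ _ (hM.1 e he), hM.2⟩

lemma mn_le_bound (adj : Fin a → Fin b → Prop) : matchingNumber adj ≤ a * b := by
  obtain ⟨M, hM, hc⟩ := exists_mn adj
  rw [← hc]
  simpa using Finset.card_le_card (Finset.subset_univ M)

/-- Matching number with row `p` deleted. -/
def baseNum (adj : Fin a → Fin b → Prop) (p : Fin a) : ℕ :=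
  matchingNumber (Function.update adj p (fun _ => False))

/-- Critical demands. -/
def critSet (adj : Fin a → Fin b → Prop) (p : Fin a) : Finset (Fin b) :=
  Finset.univ.filter fun j =>
    baseNum adj p + 1 ≤ matchingNumber (Function.update adj p (fun j' => j' = j))

lemma base_le (adj : Fin a → Fin b → Prop) (p : Fin a) (N : Fin b → Prop) :
    baseNum adj p ≤ matchingNumber (Function.update adj p N) := by
  apply mn_mono
  intro i j h
  by_cases hi : i = p
  · subst hi; simp at h
  · simpa [Function.update_of_ne hi] using h

lemma mn_update (adj : Fin a → Fin b → Prop) (p : Fin a) (N : Fin b → Prop) :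
    matchingNumber (Function.update adj p N) =
      baseNum adj p + if ∃ j ∈ critSet adj p, N j then 1 else 0 := by
  obtain ⟨M, hM, hc⟩ := exists_mn (Function.update adj p N)
  -- the matching without edges at p
  have hle : (M.filter fun e => e.1 ≠ p).card ≤ baseNum adj p := by
    apply card_le_mn
    refine ⟨?_, ?_⟩
    · intro e he
      simp only [Finset.mem_filter] at he
      have := hM.1 e he.1
      rw [Function.update_of_ne he.2] at this ⊢
      exact this
    · intro e he e' he'
      simp only [Finset.mem_filter] at he he'
      exact hM.2 e he.1 e' he'.1
  have hone : (M.filter fun e => ¬ e.1 ≠ p).card ≤ 1 := by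
    rw [Finset.card_le_one]
    intro e he e' he'
    simp only [Finset.mem_filter, not_not] at he he'
    by_contra hne
    exact (hM.2 e he.1 e' he'.1 hne).1 (he.2.trans he'.2.symm)
  have hsum := Finset.card_filter_add_card_filter_not (s := M) (fun e => e.1 ≠ p)
  have hb := base_le adj p N
  split_ifs with h
  · obtain ⟨j, hj, hN⟩ := h
    simp only [critSet, Finset.mem_filter, Finset.mem_univ, true_and] at hj
    have h2 : matchingNumber (Function.update adj p (fun j' => j' = j)) ≤
        matchingNumber (Function.update adj p N) := by
      apply mn_mono
      intro i j' h
      by_cases hi : i = p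
      · subst hi; simp at h ⊢; subst h; exact hN
      · simpa [Function.update_of_ne hi] using h
    omega
  · by_contra hne
    have hgt : baseNum adj p + 1 ≤ matchingNumber (Function.update adj p N) := by omega
    have hpos : 0 < (M.filter fun e => ¬ e.1 ≠ p).card := by omega
    obtain ⟨e, he⟩ := Finset.card_pos.1 hpos
    simp only [Finset.mem_filter, not_not] at he
    apply h
    refine ⟨e.2, ?_, ?_⟩
    · simp only [critSet, Finset.mem_filter, Finset.mem_univ, true_and]
      refine hgt.trans ?_
      rw [← hc]
      apply card_le_mn
      refine ⟨?_, hM.2⟩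
      intro e' he'
      by_cases hi : e'.1 = p
      · have : e' = e := by
          by_contra hne'
          exact (hM.2 e' he' e he.1 hne').1 (hi.trans he.2.symm)
        subst this
        rw [hi]; simp
      · have := hM.1 e' he'
        rw [Function.update_of_ne hi] at this ⊢
        exact this
    · have := hM.1 e he.1
      rw [he.2] at this
      simpa using this

lemma isolated_crit (adj : Fin a → Fin b → Prop) (p : Fin a) (j : Fin b)
    (h : ∀ i, i ≠ p → ¬ adj i j) : j ∈ critSet adj p := by
  simp only [critSet, Finset.mem_filter, Finset.mem_univ, true_and]
  obtain ⟨M, hM, hc⟩ := exists_mn (Function.update adj p (fun _ => False))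
  have hp : ∀ e ∈ M, e.1 ≠ p := by
    intro e he hep
    have := hM.1 e he
    rw [hep] at this
    simp at this
  have hj : ∀ e ∈ M, e.2 ≠ j := by
    intro e he hej
    have := hM.1 e he
    rw [Function.update_of_ne (hp e he), hej] at this
    exact h _ (hp e he) this
  have hnot : (p, j) ∉ M := fun hh => hp _ hh rfl
  have : (insert (p, j) M).card = baseNum adj p + 1 := by
    rw [Finset.card_insert_of_notMem hnot, hc]; rfl
  rw [← this]
  apply card_le_mn
  refine ⟨?_, ?_⟩
  · intro e he
    rcases Finset.mem_insert.1 he with rfl | he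
    · simp
    · have := hM.1 e he
      rw [Function.update_of_ne (hp e he)] at this ⊢
      exact this
  · intro e he e' he' hne
    rcases Finset.mem_insert.1 he with rfl | he
    · rcases Finset.mem_insert.1 he' with rfl | he'
      · exact absurd rfl hne
      · exact ⟨(hp _ he').symm, (hj _ he').symm⟩
    · rcases Finset.mem_insert.1 he' with rfl | he'
      · exact ⟨hp _ he, hj _ he⟩
      · exact hM.2 e he e' he' hne

lemma mn_perm_le (adj : Fin a → Fin b → Prop) (σ : Equiv.Perm (Fin a)) :
    matchingNumber adj ≤ matchingNumber (fun i j => adj (σ i) j) := by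
  obtain ⟨M, hM, hc⟩ := exists_mn adj
  rw [← hc, ← Finset.card_map ((σ.symm.prodCongr (Equiv.refl (Fin b))).toEmbedding)]
  apply card_le_mn
  refine ⟨?_, ?_⟩
  · intro e he
    simp only [Finset.mem_map, Equiv.coe_toEmbedding] at he
    obtain ⟨e0, he0, rfl⟩ := he
    simpa using hM.1 e0 he0
  · intro e he e' he' hne
    simp only [Finset.mem_map, Equiv.coe_toEmbedding] at he he'
    obtain ⟨e0, he0, rfl⟩ := he
    obtain ⟨e1, he1, rfl⟩ := he'
    have := hM.2 e0 he0 e1 he1 (fun h => hne (by rw [h]))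
    simpa using this

lemma mn_perm (adj : Fin a → Fin b → Prop) (σ : Equiv.Perm (Fin a)) :
    matchingNumber (fun i j => adj (σ i) j) = matchingNumber adj := by
  apply le_antisymm _ (mn_perm_le adj σ)
  have := mn_perm_le (fun i j => adj (σ i) j) σ.symm
  simpa using this

end comb

end

section
/-- real analysis: multiplicative slope condition implies concavity -/
lemma concave_of_scale (f : ℝ → ℝ) (hc : ContinuousOn f (Set.Ici 0))
    (h : ∀ l a b : ℝ, 0 < l → l ≤ 1 → 0 ≤ a → a ≤ b → l * (f b - f a) ≤ f (l * b) - f (l * a)) :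
    ConcaveOn ℝ (Set.Ici 0) f := by
  have key : ∀ x z : ℝ, 0 ≤ x → x < z → ∀ A B : ℝ, A * x + B ≤ f x → A * z + B ≤ f z →
      ∀ y ∈ Set.Icc x z, A * y + B ≤ f y := by
    intro x z hx hxz A B h1 h2
    by_contra hcon
    push Not at hcon
    obtain ⟨y0, hy0, hlt⟩ := hcon
    set g : ℝ → ℝ := fun t => f t - (A * t + B) with hg
    have hgc : ContinuousOn g (Set.Icc x z) := by
      apply ContinuousOn.sub
      · exact hc.mono (fun t ht => hx.trans ht.1)
      · fun_prop
    have hgs : ∀ l a b : ℝ, 0 < l → l ≤ 1 → 0 ≤ a → a ≤ b →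
        l * (g b - g a) ≤ g (l * b) - g (l * a) := by
      intro l a b h0 h1 h2 h3
      have := h l a b h0 h1 h2 h3
      simp only [hg]; nlinarith
    obtain ⟨y1, hy1, hmin⟩ := isCompact_Icc.exists_isMinOn (Set.nonempty_Icc.2 hxz.le) hgc
    have hneg : g y1 < 0 := lt_of_le_of_lt (hmin hy0) (by simp only [hg]; linarith)
    -- the largest minimiser
    set S := Set.Icc x z ∩ g ⁻¹' {g y1} with hS
    have hScl : IsCompact S := by
      have : IsClosed S := hgc.preimage_isClosed_of_isClosed isClosed_Icc isClosed_singleton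
      exact isCompact_Icc.of_isClosed_subset this Set.inter_subset_left
    obtain ⟨y, hyS, hymax⟩ := hScl.exists_isGreatest ⟨y1, hy1, rfl⟩
    have hgy : g y = g y1 := hyS.2
    have hyx : x < y := by
      rcases hyS.1.1.eq_or_lt with h | h
      · exfalso; rw [← h] at hgy; simp only [hg] at hgy hneg; linarith
      · exact h
    have hyz : y < z := by
      rcases hyS.1.2.eq_or_lt with h | h
      · exfalso; rw [h] at hgy; simp only [hg] at hgy hneg; linarith
      · exact h
    have hy0 : 0 < y := lt_of_le_of_lt hx hyx
    -- choose b
    obtain ⟨b, hyb, hbz, hbx⟩ : ∃ b, y < b ∧ b ≤ z ∧ x ≤ y / b * y := by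
      have ht : Filter.Tendsto (fun b => y / b * y) (nhdsWithin y (Set.Ioi y)) (nhds (y / y * y)) := by
        apply tendsto_nhdsWithin_of_tendsto_nhds
        have : ContinuousAt (fun b => y / b * y) y := by
          apply ContinuousAt.mul _ continuousAt_const
          exact continuousAt_const.div continuousAt_id hy0.ne'
        exact this
      have h1 := ht.eventually (lt_mem_nhds (by rw [div_self hy0.ne', one_mul]; exact hyx : x < y / y * y))
      have h2 : ∀ᶠ b in nhdsWithin y (Set.Ioi y), b ∈ Set.Ioc y z := Ioc_mem_nhdsGT hyz
      obtain ⟨b, hb1, hb2⟩ := (h1.and h2).exists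
      exact ⟨b, hb2.1, hb2.2, hb1.le⟩
    have hb0 : 0 < b := hy0.trans hyb
    have hl0 : 0 < y / b := div_pos hy0 hb0
    have hl1 : y / b ≤ 1 := (div_le_one hb0).2 hyb.le
    have := hgs (y / b) y b hl0 hl1 hy0.le hyb.le
    rw [div_mul_cancel₀ _ hb0.ne'] at this
    have hmem : y / b * y ∈ Set.Icc x z := ⟨hbx, by nlinarith⟩
    have h3 : g y1 ≤ g (y / b * y) := hmin hmem
    have h4 : g y1 ≤ g b := hmin ⟨(hyx.trans hyb).le, hbz⟩
    have h5 : g b ≤ g y := by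
      by_contra hlt
      push Not at hlt
      have : 0 < y / b * (g b - g y) := mul_pos hl0 (by linarith)
      linarith
    have h6 : b ∈ S := ⟨⟨(hyx.trans hyb).le, hbz⟩, by simp; linarith⟩
    exact absurd (hymax h6) (not_le.2 hyb)
  rw [concaveOn_iff_slope_anti_adjacent]
  refine ⟨convex_Ici 0, ?_⟩
  intro x y z hx hz hxy hyz
  have hxz : x < z := hxy.trans hyz
  have := key x z hx hxz ((f z - f x) / (z - x)) (f x - (f z - f x) / (z - x) * x) (by linarith)
    (by
      have : (f z - f x) / (z - x) * (z - x) = f z - f x := div_mul_cancel₀ _ (by linarith)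
      nlinarith) y ⟨hxy.le, hyz.le⟩
  have hs : (f z - f x) / (z - x) * (z - x) = f z - f x := div_mul_cancel₀ _ (by linarith)
  set s := (f z - f x) / (z - x)
  rw [div_le_div_iff₀ (by linarith) (by linarith)]
  nlinarith

end

section

/-- Service radius. -/
def rad (k n : ℕ) (x : ℝ) : ℝ := (x / (n : ℝ)) ^ ((1 : ℝ) / (k : ℝ))

/-- Volume of the unit ball. -/
def Vk (k : ℕ) : ℝ := volume.real (Metric.ball (0 : EuclideanSpace ℝ (Fin k)) 1)

/-- The unit cube. -/
def cubeS (k : ℕ) : Set (EuclideanSpace ℝ (Fin k)) := {x | ∀ i, x i ∈ Set.Icc (0 : ℝ) 1}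

lemma Vk_pos (k : ℕ) : 0 < Vk k := by
  unfold Vk Measure.real
  exact ENNReal.toReal_pos (Metric.measure_ball_pos _ _ one_pos).ne' measure_ball_lt_top.ne

lemma rad_nonneg {k n : ℕ} {x : ℝ} (hx : 0 ≤ x) : 0 ≤ rad k n x := by
  unfold rad; positivity

lemma rad_pow {k n : ℕ} (hk : 1 ≤ k) {x : ℝ} (hx : 0 ≤ x) : rad k n x ^ k = x / n := by
  unfold rad
  rw [one_div, Real.rpow_inv_natCast_pow (by positivity) (by omega)]

lemma rad_mono {k n : ℕ} {x y : ℝ} (hx : 0 ≤ x) (hxy : x ≤ y) : rad k n x ≤ rad k n y := by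
  unfold rad
  gcongr

lemma rad_mul {k n : ℕ} {l x : ℝ} (hl : 0 ≤ l) (hx : 0 ≤ x) :
    rad k n (l * x) = l ^ ((1 : ℝ) / (k : ℝ)) * rad k n x := by
  unfold rad
  rw [mul_div_assoc, Real.mul_rpow hl (by positivity)]

lemma vol_ball_rad {k n : ℕ} (hk : 1 ≤ k) {x : ℝ} (hx : 0 ≤ x) (d : EuclideanSpace ℝ (Fin k)) :
    volume.real (Metric.closedBall d (rad k n x)) = x / n * Vk k := by
  have := Measure.addHaar_real_closedBall (volume : Measure (EuclideanSpace ℝ (Fin k))) d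
    (rad_nonneg (k := k) (n := n) hx)
  rw [this, finrank_euclideanSpace_fin, rad_pow hk hx, Vk]

/-- ball part of a region -/
def ballPart (k n : ℕ) (C : Set (EuclideanSpace ℝ (Fin k))) (d : EuclideanSpace ℝ (Fin k)) (x : ℝ) : ℝ :=
  volume.real (C ∩ Metric.closedBall d (rad k n x))

lemma ballPart_sub {k n : ℕ} {C : Set (EuclideanSpace ℝ (Fin k))} (hC : MeasurableSet C)
    (d : EuclideanSpace ℝ (Fin k)) {x y : ℝ} (hx : 0 ≤ x) (hxy : x ≤ y) :
    ballPart k n C d y - ballPart k n C d x =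
      volume.real (C ∩ (Metric.closedBall d (rad k n y) \ Metric.closedBall d (rad k n x))) := by
  unfold ballPart
  rw [Set.inter_sdiff_distrib_left]
  rw [measureReal_sdiff
    (Set.inter_subset_inter_right _ (Metric.closedBall_subset_closedBall (rad_mono hx hxy)))
    (hC.inter measurableSet_closedBall)
    (measure_lt_top_of_subset Set.inter_subset_right measure_closedBall_lt_top.ne).ne]

lemma ballPart_lip {k n : ℕ} (hk : 1 ≤ k) {C : Set (EuclideanSpace ℝ (Fin k))} (hC : MeasurableSet C)
    (d : EuclideanSpace ℝ (Fin k)) {x y : ℝ} (hx : 0 ≤ x) (hxy : x ≤ y) :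
    0 ≤ ballPart k n C d y - ballPart k n C d x ∧
      ballPart k n C d y - ballPart k n C d x ≤ Vk k / n * (y - x) := by
  rw [ballPart_sub hC d hx hxy]
  refine ⟨measureReal_nonneg, ?_⟩
  have h1 := ballPart_sub (n := n) (MeasurableSet.univ) d hx hxy
  simp only [ballPart, Set.univ_inter] at h1
  rw [vol_ball_rad hk hx, vol_ball_rad hk (hx.trans hxy)] at h1
  calc _ ≤ volume.real (Metric.closedBall d (rad k n y) \ Metric.closedBall d (rad k n x)) := by
        refine measureReal_mono Set.inter_subset_right ?_
        exact (measure_lt_top_of_subset Set.sdiff_subset measure_closedBall_lt_top.ne).ne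
    _ = _ := by rw [← h1]; ring

lemma ballPart_concave {k n : ℕ} (hk : 1 ≤ k) {C : Set (EuclideanSpace ℝ (Fin k))}
    (hC : MeasurableSet C) (d : EuclideanSpace ℝ (Fin k))
    (hstar : ∀ y ∈ C, ∀ t : ℝ, 0 < t → t ≤ 1 → AffineMap.homothety d t y ∈ C) :
    ConcaveOn ℝ (Set.Ici 0) (ballPart k n C d) := by
  apply concave_of_scale
  · have : LipschitzOnWith (Real.toNNReal (Vk k / n)) (ballPart k n C d) (Set.Ici 0) := by
      apply LipschitzOnWith.of_le_add_mul
      intro x hx y hy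
      rw [Real.coe_toNNReal _ (by have := Vk_pos k; positivity), Real.dist_eq]
      rcases le_total x y with h | h
      · have := (ballPart_lip (n := n) hk hC d hx h).1
        have h2 : 0 ≤ Vk k / n * |x - y| := by have := Vk_pos k; positivity
        linarith
      · have := (ballPart_lip (n := n) hk hC d hy h).2
        rw [abs_of_nonneg (by linarith)]
        linarith
    exact this.continuousOn
  · intro l a b hl hl1 ha hab
    rw [ballPart_sub hC d ha hab, ballPart_sub hC d (by positivity) (by gcongr)]
    set t : ℝ := l ^ ((1 : ℝ) / (k : ℝ)) with ht
    have ht0 : 0 < t := by positivity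
    have ht1 : t ≤ 1 := Real.rpow_le_one hl.le hl1 (by positivity)
    have htk : t ^ k = l := by
      rw [ht, one_div, Real.rpow_inv_natCast_pow hl.le (by omega)]
    have him := Measure.addHaar_image_homothety (volume : Measure (EuclideanSpace ℝ (Fin k))) d t
      (C ∩ (Metric.closedBall d (rad k n b) \ Metric.closedBall d (rad k n a)))
    rw [finrank_euclideanSpace_fin, htk, abs_of_pos hl] at him
    have : l * volume.real (C ∩ (Metric.closedBall d (rad k n b) \ Metric.closedBall d (rad k n a)))
        = volume.real (AffineMap.homothety d t ''
          (C ∩ (Metric.closedBall d (rad k n b) \ Metric.closedBall d (rad k n a)))) := by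
      unfold Measure.real
      rw [him, ENNReal.toReal_mul, ENNReal.toReal_ofReal hl.le]
    rw [this]
    apply measureReal_mono
    · rintro _ ⟨y, ⟨hy, hy1, hy2⟩, rfl⟩
      refine ⟨hstar y hy t ht0 ht1, ?_, ?_⟩
      · rw [Metric.mem_closedBall] at hy1 ⊢
        rw [rad_mul hl.le (ha.trans hab), dist_homothety_center, Real.norm_of_nonneg ht0.le, dist_comm]
        gcongr
      · rw [Metric.mem_closedBall, not_le] at hy2 ⊢
        rw [rad_mul hl.le ha, dist_homothety_center, Real.norm_of_nonneg ht0.le, dist_comm]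
        gcongr
    · exact (measure_lt_top_of_subset (Set.inter_subset_right.trans Set.sdiff_subset)
        measure_closedBall_lt_top.ne).ne

/-- tie-broken Voronoi cell -/
def vcell {k m : ℕ} (T : Finset (Fin m)) (D : Fin m → EuclideanSpace ℝ (Fin k)) (i : Fin m) :
    Set (EuclideanSpace ℝ (Fin k)) :=
  {y | ∀ l ∈ T, dist y (D i) ≤ dist y (D l) ∧ (l < i → dist y (D i) < dist y (D l))}

lemma cubeS_closed (k : ℕ) : IsClosed (cubeS k) := by
  unfold cubeS
  simp only [Set.ofPred_forall]
  exact isClosed_iInter fun i => isClosed_Icc.preimage (by fun_prop)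

lemma vcell_meas {k m : ℕ} (T : Finset (Fin m)) (D : Fin m → EuclideanSpace ℝ (Fin k)) (i : Fin m) :
    MeasurableSet (cubeS k ∩ vcell T D i) := by
  apply (cubeS_closed k).measurableSet.inter
  unfold vcell
  simp only [Set.ofPred_forall, Set.ofPred_and]
  refine MeasurableSet.iInter fun l => MeasurableSet.iInter fun _ => MeasurableSet.inter ?_ ?_
  · exact measurableSet_le (by fun_prop) (by fun_prop)
  · by_cases h : l < i
    · simp only [h, Set.iInter_true]
      exact measurableSet_lt (f := fun y => dist y (D i)) (g := fun y => dist y (D l))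
        (by fun_prop) (by fun_prop)
    · simp [h]

lemma cubeS_star {k : ℕ} {d y : EuclideanSpace ℝ (Fin k)} (hd : d ∈ cubeS k) (hy : y ∈ cubeS k)
    {t : ℝ} (h0 : 0 < t) (h1 : t ≤ 1) : AffineMap.homothety d t y ∈ cubeS k := by
  intro i
  have e : (AffineMap.homothety d t y) i = t * (y i - d i) + d i := by
    simp [AffineMap.homothety_apply]
  rw [e]
  have hd := hd i
  have hy := hy i
  constructor
  · nlinarith [hd.1, hy.1, mul_nonneg h0.le hy.1, mul_nonneg (sub_nonneg.2 h1) hd.1]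
  · nlinarith [hd.2, hy.2, mul_nonneg h0.le (sub_nonneg.2 hy.2),
      mul_nonneg (sub_nonneg.2 h1) (sub_nonneg.2 hd.2)]

lemma vcell_star {k m : ℕ} (T : Finset (Fin m)) (D : Fin m → EuclideanSpace ℝ (Fin k)) (i : Fin m)
    (hd : D i ∈ cubeS k) :
    ∀ y ∈ cubeS k ∩ vcell T D i, ∀ t : ℝ, 0 < t → t ≤ 1 →
      AffineMap.homothety (D i) t y ∈ cubeS k ∩ vcell T D i := by
  rintro y ⟨hy1, hy2⟩ t ht0 ht1
  refine ⟨cubeS_star hd hy1 ht0 ht1, ?_⟩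
  intro l hl
  have h := hy2 l hl
  have e1 : dist (AffineMap.homothety (D i) t y) (D i) = t * dist y (D i) := by
    rw [dist_homothety_center, Real.norm_of_nonneg ht0.le, dist_comm]
  have e2 : dist y (AffineMap.homothety (D i) t y) = (1 - t) * dist y (D i) := by
    rw [dist_self_homothety, Real.norm_of_nonneg (by linarith), dist_comm]
  have e3 := dist_triangle y (AffineMap.homothety (D i) t y) (D l)
  rw [e1]
  refine ⟨by nlinarith [h.1], fun hli => by nlinarith [h.2 hli]⟩

lemma unif_real {k : ℕ} {A : Set (EuclideanSpace ℝ (Fin k))} (hA : MeasurableSet A) :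
    (unifCube k).real A = volume.real (cubeS k ∩ A) := by
  unfold unifCube
  rw [measureReal_restrict_apply hA, Set.inter_comm]; rfl

lemma near_eq_sum {k n m : ℕ} (T : Finset (Fin m)) (D : Fin m → EuclideanSpace ℝ (Fin k)) (x : ℝ) :
    (unifCube k).real {y | ∃ i ∈ T, dist y (D i) ≤ rad k n x} =
      ∑ i ∈ T, ballPart k n (cubeS k ∩ vcell T D i) (D i) x := by
  have hm : MeasurableSet {y | ∃ i ∈ T, dist y (D i) ≤ rad k n x} := by
    have : {y | ∃ i ∈ T, dist y (D i) ≤ rad k n x} =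
        ⋃ i ∈ T, Metric.closedBall (D i) (rad k n x) := by ext; simp
    rw [this]
    exact Finset.measurableSet_biUnion _ fun i _ => measurableSet_closedBall
  rw [unif_real hm]
  unfold ballPart
  have hu : cubeS k ∩ {y | ∃ i ∈ T, dist y (D i) ≤ rad k n x} =
      ⋃ i ∈ T, ((cubeS k ∩ vcell T D i) ∩ Metric.closedBall (D i) (rad k n x)) := by
    ext y
    simp only [Set.mem_inter_iff, Set.mem_ofPred_eq, Set.mem_iUnion, Metric.mem_closedBall, exists_prop]
    constructor
    · rintro ⟨hy, i, hi, hle⟩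
      obtain ⟨j, hj, hmin⟩ := Finset.exists_min_image T (fun l => toLex (dist y (D l), l)) ⟨i, hi⟩
      have hmin' : ∀ l ∈ T, dist y (D j) < dist y (D l) ∨ (dist y (D j) = dist y (D l) ∧ j ≤ l) := by
        intro l hl
        have := hmin l hl
        rw [Prod.Lex.toLex_le_toLex] at this
        exact this
      refine ⟨j, hj, ⟨hy, ?_⟩, ?_⟩
      · intro l hl
        rcases hmin' l hl with h | ⟨h, h'⟩
        · exact ⟨h.le, fun _ => h⟩
        · exact ⟨h.le, fun hh => absurd hh (not_lt.2 h')⟩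
      · rcases hmin' i hi with h | ⟨h, h'⟩ <;> linarith
    · rintro ⟨i, hi, ⟨hy, -⟩, hle⟩
      exact ⟨hy, i, hi, hle⟩
  rw [hu, measureReal_biUnion_finset (h := fun i hi =>
    (measure_lt_top_of_subset Set.inter_subset_right measure_closedBall_lt_top.ne).ne)]
  · intro i hi j hj hij
    rw [Function.onFun, Set.disjoint_left]
    rintro y ⟨⟨-, h1⟩, -⟩ ⟨⟨-, h2⟩, -⟩
    rcases lt_or_gt_of_ne hij with h | h
    · have := (h2 i hi).2 h
      linarith [(h1 j hj).1]
    · have := (h1 j hj).2 h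
      linarith [(h2 i hi).1]
  · intro i hi
    exact (vcell_meas T D i).inter measurableSet_closedBall

end

section

lemma mp_update {ι α : Type*} [Fintype ι] [DecidableEq ι] [MeasurableSpace α] (ν : Measure α)
    [IsProbabilityMeasure ν] (i : ι) :
    MeasurePreserving (fun q : (ι → α) × α => Function.update q.1 i q.2)
      ((Measure.pi fun _ : ι => ν).prod ν) (Measure.pi fun _ : ι => ν) := by
  have hm : Measurable (fun q : (ι → α) × α => Function.update q.1 i q.2) := by
    rw [measurable_pi_iff]
    intro j
    by_cases h : j = i
    · subst h; simpa using measurable_snd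
    · simp only [Function.update_of_ne h]
      exact (measurable_pi_apply j).comp measurable_fst
  refine ⟨hm, ?_⟩
  symm
  apply Measure.pi_eq
  intro s hs
  rw [Measure.map_apply hm (MeasurableSet.univ_pi hs)]
  have : (fun q : (ι → α) × α => Function.update q.1 i q.2) ⁻¹' Set.univ.pi s =
      (Set.univ.pi (Function.update s i Set.univ)) ×ˢ s i := by
    ext ⟨x, y⟩
    simp only [Set.mem_preimage, Set.mem_univ_pi, Set.mem_prod]
    constructor
    · intro h
      refine ⟨fun j => ?_, by simpa using h i⟩
      by_cases hj : j = i
      · subst hj; simp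
      · simpa [Function.update_of_ne hj] using h j
    · rintro ⟨h1, h2⟩ j
      by_cases hj : j = i
      · subst hj; simpa using h2
      · simpa [Function.update_of_ne hj] using h1 j
  rw [this, Measure.prod_prod, Measure.pi_pi]
  rw [← Finset.mul_prod_erase _ _ (Finset.mem_univ i),
    ← Finset.mul_prod_erase Finset.univ (fun i => ν (s i)) (Finset.mem_univ i)]
  simp only [Function.update_self, measure_univ, one_mul]
  rw [mul_comm]
  congr 1
  apply Finset.prod_congr rfl
  intro j hj
  rw [Function.update_of_ne (Finset.ne_of_mem_erase hj)]

lemma integral_resample {ι α : Type*} [Fintype ι] [DecidableEq ι] [MeasurableSpace α] (ν : Measure α)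
    [IsProbabilityMeasure ν] (i : ι) (f : (ι → α) → ℝ) (hf : Measurable f)
    (C : ℝ) (hC : ∀ x, |f x| ≤ C) :
    ∫ x, f x ∂(Measure.pi fun _ : ι => ν) =
      ∫ x, ∫ y, f (Function.update x i y) ∂ν ∂(Measure.pi fun _ : ι => ν) := by
  have h := mp_update (ι := ι) ν i
  rw [← h.map_eq, integral_map h.measurable.aemeasurable hf.aestronglyMeasurable]
  rw [h.map_eq]
  apply integral_prod
  exact Integrable.of_bound (hf.comp h.measurable).aestronglyMeasurable C
    (Filter.Eventually.of_forall fun x => hC _)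

lemma vol_box (k : ℕ) (a b : ℝ) :
    (volume {x : EuclideanSpace ℝ (Fin k) | ∀ i, x i ∈ Set.Icc a b}) = ENNReal.ofReal (b - a) ^ k := by
  have h := EuclideanSpace.volume_preserving_symm_measurableEquiv_toLp (Fin k)
  have : {x : EuclideanSpace ℝ (Fin k) | ∀ i, x i ∈ Set.Icc a b} =
      (MeasurableEquiv.toLp 2 (Fin k → ℝ)).symm ⁻¹' (Set.univ.pi fun _ => Set.Icc a b) := by
    ext x; simp [Pi.le_def, forall_and]
  rw [this, h.measure_preimage (MeasurableSet.univ_pi fun _ => measurableSet_Icc).nullMeasurableSet]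
  rw [volume_pi, Measure.pi_pi]
  simp

instance unif_prob (k : ℕ) : IsProbabilityMeasure (unifCube k) := by
  constructor
  unfold unifCube
  rw [Measure.restrict_apply_univ, vol_box]
  simp

lemma adj_update_r {k n m : ℕ} (S : Fin n → EuclideanSpace ℝ (Fin k)) (r : Fin n → ℝ)
    (D : Fin m → EuclideanSpace ℝ (Fin k)) (p : Fin n) (x : ℝ) :
    (fun i j => adjOf k n S (Function.update r p x) D i j) =
      Function.update (fun i j => adjOf k n S r D i j) p (fun j => dist (S p) (D j) ≤ rad k n x) := by
  funext i j
  by_cases h : i = p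
  · subst h; simp [adjOf, rad]
  · simp [adjOf, Function.update_of_ne h]

lemma adj_update_S {k n m : ℕ} (S : Fin n → EuclideanSpace ℝ (Fin k)) (r : Fin n → ℝ)
    (D : Fin m → EuclideanSpace ℝ (Fin k)) (p : Fin n) (s : EuclideanSpace ℝ (Fin k))
    (N : Fin m → Prop) :
    Function.update (fun i j => adjOf k n (Function.update S p s) r D i j) p N =
      Function.update (fun i j => adjOf k n S r D i j) p N := by
  funext i j
  by_cases h : i = p
  · subst h; simp
  · simp [adjOf, Function.update_of_ne h]

/-- critical set for the geometric graph -/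
def gT {k n m : ℕ} (r : Fin n → ℝ) (p : Fin n) (S : Fin n → EuclideanSpace ℝ (Fin k))
    (D : Fin m → EuclideanSpace ℝ (Fin k)) : Finset (Fin m) :=
  critSet (fun i j => adjOf k n S r D i j) p

def gB {k n m : ℕ} (r : Fin n → ℝ) (p : Fin n) (S : Fin n → EuclideanSpace ℝ (Fin k))
    (D : Fin m → EuclideanSpace ℝ (Fin k)) : ℕ :=
  baseNum (fun i j => adjOf k n S r D i j) p

lemma gT_upd {k n m : ℕ} (r : Fin n → ℝ) (p : Fin n) (S : Fin n → EuclideanSpace ℝ (Fin k))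
    (D : Fin m → EuclideanSpace ℝ (Fin k)) (s : EuclideanSpace ℝ (Fin k)) :
    gT r p (Function.update S p s) D = gT r p S D := by
  unfold gT critSet baseNum
  simp only [adj_update_S]

lemma meas_pattern {k n m : ℕ} (r : Fin n → ℝ) {β : Type*} [MeasurableSpace β]
    (F : (Fin n → Fin m → Prop) → β) :
    Measurable fun q : (Fin n → EuclideanSpace ℝ (Fin k)) × (Fin m → EuclideanSpace ℝ (Fin k)) =>
      F (fun i j => adjOf k n q.1 r q.2 i j) := by
  have h : Measurable fun q : (Fin n → EuclideanSpace ℝ (Fin k)) × (Fin m → EuclideanSpace ℝ (Fin k)) =>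
      (fun i j => adjOf k n q.1 r q.2 i j) := by
    rw [measurable_pi_iff]; intro i
    rw [measurable_pi_iff]; intro j
    rw [← measurableSet_setOfPred]
    unfold adjOf
    apply measurableSet_le _ measurable_const
    fun_prop
  exact (Measurable.of_discrete (f := F)).comp h


end

section

/-- product uniform measure -/
abbrev pU (k n : ℕ) : Measure (Fin n → EuclideanSpace ℝ (Fin k)) := Measure.pi fun _ => unifCube k

/-- conditional success probability -/
def gG {k n m : ℕ} (r : Fin n → ℝ) (p : Fin n) (S : Fin n → EuclideanSpace ℝ (Fin k))
    (D : Fin m → EuclideanSpace ℝ (Fin k)) (x : ℝ) : ℝ :=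
  (unifCube k).real {y | ∃ i ∈ gT r p S D, dist y (D i) ≤ rad k n x}

def gInc {k n m : ℕ} (r : Fin n → ℝ) (p : Fin n) (x : ℝ)
    (q : (Fin n → EuclideanSpace ℝ (Fin k)) × (Fin m → EuclideanSpace ℝ (Fin k))) : ℝ :=
  if ∃ i ∈ gT r p q.1 q.2, dist (q.1 p) (q.2 i) ≤ rad k n x then 1 else 0

lemma gInc_meas {k n m : ℕ} (r : Fin n → ℝ) (p : Fin n) (x : ℝ) :
    Measurable (gInc (k := k) (m := m) r p x) := by
  unfold gInc
  apply Measurable.ite _ measurable_const measurable_const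
  have : {q : (Fin n → EuclideanSpace ℝ (Fin k)) × (Fin m → EuclideanSpace ℝ (Fin k)) |
      ∃ i ∈ gT r p q.1 q.2, dist (q.1 p) (q.2 i) ≤ rad k n x} =
      ⋃ i : Fin m, {q | i ∈ gT r p q.1 q.2} ∩ {q | dist (q.1 p) (q.2 i) ≤ rad k n x} := by
    ext q; simp
  rw [this]
  refine MeasurableSet.iUnion fun i => MeasurableSet.inter ?_ ?_
  · rw [measurableSet_setOfPred]
    exact meas_pattern r (fun adj => i ∈ critSet adj p)
  · exact measurableSet_le (by fun_prop) measurable_const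

lemma gInc_bound {k n m : ℕ} (r : Fin n → ℝ) (p : Fin n) (x : ℝ) (q) :
    |gInc (k := k) (m := m) r p x q| ≤ 1 := by
  unfold gInc; split_ifs <;> simp

lemma gInc_upd {k n m : ℕ} (r : Fin n → ℝ) (p : Fin n) (x : ℝ)
    (S : Fin n → EuclideanSpace ℝ (Fin k))
    (D : Fin m → EuclideanSpace ℝ (Fin k)) :
    ∫ s, gInc r p x (Function.update S p s, D) ∂(unifCube k) = gG r p S D x := by
  unfold gInc gG
  simp only [gT_upd, Function.update_self]
  have hm : MeasurableSet {y | ∃ i ∈ gT r p S D, dist y (D i) ≤ rad k n x} := by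
    have : {y | ∃ i ∈ gT r p S D, dist y (D i) ≤ rad k n x} =
        ⋃ i ∈ gT r p S D, Metric.closedBall (D i) (rad k n x) := by ext; simp
    rw [this]
    exact Finset.measurableSet_biUnion _ fun i _ => measurableSet_closedBall
  rw [← integral_indicator_one hm]
  congr 1
  funext y
  simp [Set.indicator_apply]

lemma gG_meas {k n m : ℕ} (r : Fin n → ℝ) (p : Fin n) (x : ℝ) :
    Measurable fun q : (Fin n → EuclideanSpace ℝ (Fin k)) × (Fin m → EuclideanSpace ℝ (Fin k)) =>
      gG r p q.1 q.2 x := by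
  simp_rw [← gInc_upd]
  have h : Measurable fun w : ((Fin n → EuclideanSpace ℝ (Fin k)) × (Fin m → EuclideanSpace ℝ (Fin k))) ×
      EuclideanSpace ℝ (Fin k) => gInc r p x (Function.update w.1.1 p w.2, w.1.2) := by
    apply (gInc_meas r p x).comp
    apply Measurable.prodMk _ (by fun_prop)
    exact (mp_update (ι := Fin n) (unifCube k) p).measurable.comp
      (f := fun w : ((Fin n → EuclideanSpace ℝ (Fin k)) × (Fin m → EuclideanSpace ℝ (Fin k))) ×
      EuclideanSpace ℝ (Fin k) => (w.1.1, w.2)) (by fun_prop)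
  exact (h.stronglyMeasurable.integral_prod_right (ν := unifCube k)).measurable

lemma gG_bound {k n m : ℕ} (r : Fin n → ℝ) (p : Fin n) (x : ℝ) (S : Fin n → EuclideanSpace ℝ (Fin k))
    (D : Fin m → EuclideanSpace ℝ (Fin k)) : 0 ≤ gG r p S D x ∧ gG r p S D x ≤ 1 :=
  ⟨measureReal_nonneg, measureReal_le_one⟩

lemma gG_int {k n m : ℕ} (r : Fin n → ℝ) (p : Fin n) (x : ℝ) :
    Integrable (fun q : (Fin n → EuclideanSpace ℝ (Fin k)) × (Fin m → EuclideanSpace ℝ (Fin k)) =>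
      gG r p q.1 q.2 x) ((pU k n).prod (pU k m)) :=
  Integrable.of_bound (gG_meas r p x).aestronglyMeasurable 1
    (Filter.Eventually.of_forall fun q => by
      rw [Real.norm_of_nonneg (gG_bound r p x _ _).1]; exact (gG_bound r p x _ _).2)

lemma gInc_int {k n m : ℕ} (r : Fin n → ℝ) (p : Fin n) (x : ℝ) :
    Integrable (gInc (k := k) (m := m) r p x) ((pU k n).prod (pU k m)) :=
  Integrable.of_bound (gInc_meas r p x).aestronglyMeasurable 1
    (Filter.Eventually.of_forall fun q => gInc_bound r p x q)

lemma gInc_eq_gG {k n m : ℕ} (r : Fin n → ℝ) (p : Fin n) (x : ℝ) :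
    ∫ q, gInc (k := k) (m := m) r p x q ∂((pU k n).prod (pU k m)) =
      ∫ q, gG r p q.1 q.2 x ∂((pU k n).prod (pU k m)) := by
  rw [integral_prod_symm _ (gInc_int r p x), integral_prod_symm _ (gG_int r p x)]
  congr 1
  funext D
  rw [integral_resample (unifCube k) p (fun S => gInc r p x (S, D))
    ((gInc_meas r p x).comp (by fun_prop)) 1 (fun S => gInc_bound r p x _)]
  congr 1
  funext S
  exact gInc_upd r p x S D

lemma mn_int {k n m : ℕ} (F : (Fin n → Fin m → Prop) → ℕ) (hF : ∀ a, F a ≤ n * m) (r : Fin n → ℝ) :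
    Integrable (fun q : (Fin n → EuclideanSpace ℝ (Fin k)) × (Fin m → EuclideanSpace ℝ (Fin k)) =>
      (F (fun i j => adjOf k n q.1 r q.2 i j) : ℝ)) ((pU k n).prod (pU k m)) := by
  refine Integrable.of_bound (meas_pattern r (fun a => (F a : ℝ))).aestronglyMeasurable
    ((n * m : ℕ) : ℝ) (Filter.Eventually.of_forall fun q => ?_)
  rw [Real.norm_of_nonneg (by positivity)]
  exact_mod_cast hF _

lemma muU_prod {k n m : ℕ} (r : Fin n → ℝ) :
    muU k n m r = ∫ q, (matchingNumber (fun i j => adjOf k n q.1 r q.2 i j) : ℝ)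
      ∂((pU k n).prod (pU k m)) := by
  rw [integral_prod _ (mn_int matchingNumber mn_le_bound r)]
  rfl

lemma muU_rep {k n m : ℕ} (r : Fin n → ℝ) (p : Fin n) (x : ℝ) :
    muU k n m (Function.update r p x) =
      (∫ q, (gB r p q.1 q.2 : ℝ) ∂((pU k n).prod (pU k m))) +
      ∫ q, gG r p q.1 q.2 x ∂((pU k n).prod (pU k m)) := by
  rw [muU_prod, ← gInc_eq_gG, ← integral_add _ (gInc_int r p x)]
  · congr 1
    funext q
    rw [adj_update_r, mn_update]
    unfold gInc gT gB
    push_cast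
    rfl
  · exact mn_int (fun a => baseNum a p) (fun a => mn_le_bound _) r

lemma ae_cube (k m : ℕ) : ∀ᵐ D ∂(pU k m), ∀ i, D i ∈ cubeS k := by
  rw [ae_all_iff]
  intro i
  have h : ∀ᵐ d ∂(unifCube k), d ∈ cubeS k := by
    unfold unifCube
    exact ae_restrict_mem (cubeS_closed k).measurableSet
  exact (Measure.tendsto_eval_ae_ae (μ := fun _ : Fin m => unifCube k) (i := i)).eventually h

lemma ae_cube' (k n m : ℕ) : ∀ᵐ q ∂((pU k n).prod (pU k m)), ∀ i, q.2 i ∈ cubeS k :=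
  Measure.quasiMeasurePreserving_snd.ae (ae_cube k m)

/-- one-coordinate Lipschitz bound -/
lemma muU_lip1 {k n m : ℕ} (hk : 1 ≤ k) (r : Fin n → ℝ) (p : Fin n) {x y : ℝ} (hx : 0 ≤ x) (hy : 0 ≤ y) :
    |muU k n m (Function.update r p x) - muU k n m (Function.update r p y)| ≤
      m * (Vk k / n) * |x - y| := by
  wlog hxy : y ≤ x generalizing x y
  · rw [abs_sub_comm, abs_sub_comm x y]
    exact this hy hx (le_of_not_ge hxy)
  rw [muU_rep, muU_rep, add_sub_add_left_eq_sub, ← integral_sub (gG_int r p x) (gG_int r p y)]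
  have hb : ∀ q : (Fin n → EuclideanSpace ℝ (Fin k)) × (Fin m → EuclideanSpace ℝ (Fin k)),
      ‖gG r p q.1 q.2 x - gG r p q.1 q.2 y‖ ≤ m * (Vk k / n) * |x - y| := by
    intro q
    unfold gG
    rw [near_eq_sum, near_eq_sum, ← Finset.sum_sub_distrib]
    have h := fun i => ballPart_lip (n := n) hk (vcell_meas (gT r p q.1 q.2) q.2 i) (q.2 i) hy hxy
    rw [Real.norm_of_nonneg (Finset.sum_nonneg fun i _ => (h i).1), abs_of_nonneg (by linarith)]
    calc _ ≤ ∑ i ∈ gT r p q.1 q.2, Vk k / n * (x - y) := Finset.sum_le_sum fun i _ => (h i).2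
      _ ≤ ∑ i : Fin m, Vk k / n * (x - y) := by
          apply Finset.sum_le_sum_of_subset_of_nonneg (Finset.subset_univ _)
          intro i _ _
          have := Vk_pos k
          have : 0 ≤ x - y := by linarith
          positivity
      _ = _ := by simp; ring
  have := norm_integral_le_of_norm_le_const (μ := (pU k n).prod (pU k m)) (Filter.Eventually.of_forall hb)
  simpa using this


end

section

lemma ms_and {α : Type*} [MeasurableSpace α] {P Q : α → Prop} (h : MeasurableSet {a | P a})
    (h' : MeasurableSet {a | Q a}) : MeasurableSet {a | P a ∧ Q a} := h.inter h'

def halfS {k : ℕ} (d z : EuclideanSpace ℝ (Fin k)) : Set (EuclideanSpace ℝ (Fin k)) :=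
  {y | dist y d ≤ dist y z}

def gap {n : ℕ} (r : Fin n → ℝ) (f : ℝ → ℝ) : ℝ := f ((∑ j, r j) / n) - (∑ i, f (r i)) / n

lemma half_vol {k n : ℕ} (hk : 1 ≤ k) (d : EuclideanSpace ℝ (Fin k)) {x : ℝ} (hx : 0 ≤ x) :
    ((volume : Measure (EuclideanSpace ℝ (Fin k))).prod
      (volume : Measure (EuclideanSpace ℝ (Fin k)))).real
      {q : EuclideanSpace ℝ (Fin k) × EuclideanSpace ℝ (Fin k) | dist q.2 d ≤ rad k n x ∧ dist q.1 d < dist q.2 d} = (x / n * Vk k) ^ 2 / 2 := by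
  set ρ := rad k n x
  set μ := ((volume : Measure (EuclideanSpace ℝ (Fin k))).prod (volume : Measure (EuclideanSpace ℝ (Fin k)))) with hμ
  set A : Set (EuclideanSpace ℝ (Fin k) × EuclideanSpace ℝ (Fin k)) :=
    {q | dist q.2 d ≤ ρ ∧ dist q.1 d < dist q.2 d} with hA
  set A' : Set (EuclideanSpace ℝ (Fin k) × EuclideanSpace ℝ (Fin k)) :=
    {q | dist q.1 d ≤ ρ ∧ dist q.2 d < dist q.1 d} with hA'
  set Z : Set (EuclideanSpace ℝ (Fin k) × EuclideanSpace ℝ (Fin k)) :=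
    {q | dist q.1 d ≤ ρ ∧ dist q.2 d = dist q.1 d} with hZ
  have mA : MeasurableSet A := ms_and (measurableSet_le (by fun_prop) (by fun_prop))
    (measurableSet_lt (by fun_prop) (by fun_prop))
  have mA' : MeasurableSet A' := ms_and (measurableSet_le (by fun_prop) (by fun_prop))
    (measurableSet_lt (by fun_prop) (by fun_prop))
  have mZ : MeasurableSet Z := ms_and (measurableSet_le (by fun_prop) (by fun_prop))
    (measurableSet_eq_fun (by fun_prop) (by fun_prop))
  have hsw : μ A' = μ A := by
    have h : MeasurePreserving Prod.swap μ μ := Measure.measurePreserving_swap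
    rw [← h.measure_preimage mA.nullMeasurableSet]
    rfl
  have hnull : μ Z = 0 := by
    rw [hμ, Measure.measure_prod_null mZ]
    refine Filter.Eventually.of_forall fun y => ?_
    refine measure_mono_null (t := Metric.sphere d (dist y d)) ?_ ?_
    · intro w hw; exact hw.2
    · by_cases h0 : dist y d = 0
      · have : Nontrivial (EuclideanSpace ℝ (Fin k)) := by
          have : Nonempty (Fin k) := ⟨⟨0, hk⟩⟩
          infer_instance
        exact Measure.addHaar_sphere _ _ _
      · exact Measure.addHaar_sphere_of_ne_zero _ _ h0
  have hun : Metric.closedBall d ρ ×ˢ Metric.closedBall d ρ = (A ∪ A') ∪ Z := by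
    ext ⟨y, w⟩
    simp only [Set.mem_prod, Metric.mem_closedBall, Set.mem_union, hA, hA', hZ, Set.mem_ofPred_eq]
    constructor
    · rintro ⟨h1, h2⟩
      rcases lt_trichotomy (dist y d) (dist w d) with h | h | h
      · exact Or.inl (Or.inl ⟨h2, h⟩)
      · exact Or.inr ⟨h1, h.symm⟩
      · exact Or.inl (Or.inr ⟨h1, h⟩)
    · rintro ((⟨h1, h2⟩ | ⟨h1, h2⟩) | ⟨h1, h2⟩)
      · exact ⟨by linarith, h1⟩
      · exact ⟨h1, by linarith⟩
      · exact ⟨h1, by linarith⟩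
  have hdis : Disjoint A A' := by
    rw [Set.disjoint_left]
    rintro q ⟨_, h1⟩ ⟨_, h2⟩
    linarith
  have htot : μ (Metric.closedBall d ρ ×ˢ Metric.closedBall d ρ) = μ A + μ A := by
    have hd2 : Disjoint (A ∪ A') Z := by
      rw [Set.disjoint_left]
      rintro q (⟨_, h1⟩ | ⟨_, h1⟩) ⟨_, h2⟩ <;> linarith
    rw [hun, measure_union hd2 mZ, hnull, add_zero, measure_union hdis mA', hsw]
  rw [hμ, Measure.prod_prod] at htot
  have hfin : μ A ≠ ⊤ := by
    intro h
    rw [← hμ, h] at htot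
    exact (ENNReal.mul_lt_top measure_closedBall_lt_top measure_closedBall_lt_top).ne htot
  have h2 := congrArg ENNReal.toReal htot
  rw [ENNReal.toReal_mul, ENNReal.toReal_add hfin hfin] at h2
  have h3 := vol_ball_rad (n := n) hk hx d
  unfold Measure.real at h3 ⊢
  rw [h3] at h2
  linarith

lemma halfS_meas {k : ℕ} (d z : EuclideanSpace ℝ (Fin k)) : MeasurableSet (halfS d z) :=
  measurableSet_le (by fun_prop) (by fun_prop)

lemma ballPart_bound {k n : ℕ} (hk : 1 ≤ k) (C : Set (EuclideanSpace ℝ (Fin k)))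
    (d : EuclideanSpace ℝ (Fin k)) {x : ℝ} (hx : 0 ≤ x) :
    0 ≤ ballPart k n C d x ∧ ballPart k n C d x ≤ x / n * Vk k := by
  refine ⟨measureReal_nonneg, ?_⟩
  rw [← vol_ball_rad hk hx d]
  exact measureReal_mono Set.inter_subset_right measure_closedBall_lt_top.ne

lemma ballPart_half_meas (k n : ℕ) (x : ℝ) :
    Measurable fun q : EuclideanSpace ℝ (Fin k) × EuclideanSpace ℝ (Fin k) =>
      ballPart k n (halfS q.1 q.2) q.1 x := by
  have : MeasurableSet {w : (EuclideanSpace ℝ (Fin k) × EuclideanSpace ℝ (Fin k)) ×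
      EuclideanSpace ℝ (Fin k) | dist w.2 w.1.1 ≤ dist w.2 w.1.2 ∧ dist w.2 w.1.1 ≤ rad k n x} :=
    ms_and (measurableSet_le (by fun_prop) (by fun_prop))
    (measurableSet_le (by fun_prop) (by fun_prop))
  exact (measurable_measure_prodMk_left (ν := volume) this).ennreal_toReal

lemma half_integral {k n : ℕ} (hk : 1 ≤ k) (d : EuclideanSpace ℝ (Fin k)) {x M : ℝ} (hx : 0 ≤ x)
    (hxM : x ≤ M) :
    ∫ z in Metric.closedBall d (2 * rad k n M), ballPart k n (halfS d z) d x =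
      x / n * Vk k * volume.real (Metric.closedBall d (2 * rad k n M)) - (x / n * Vk k) ^ 2 / 2 := by
  set ρ := rad k n x with hρ
  set R := 2 * rad k n M with hR
  have hρR : 2 * ρ ≤ R := by have := rad_mono (k := k) (n := n) hx hxM; linarith
  set A : Set (EuclideanSpace ℝ (Fin k) × EuclideanSpace ℝ (Fin k)) :=
    {q | dist q.2 d ≤ ρ ∧ dist q.2 q.1 < dist q.2 d} with hA
  have mA : MeasurableSet A := ms_and (measurableSet_le (by fun_prop) (by fun_prop))
    (measurableSet_lt (by fun_prop) (by fun_prop))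
  set A' : Set (EuclideanSpace ℝ (Fin k) × EuclideanSpace ℝ (Fin k)) :=
    {q | dist q.2 d ≤ ρ ∧ dist q.1 d < dist q.2 d} with hA'
  have mA' : MeasurableSet A' := ms_and (measurableSet_le (by fun_prop) (by fun_prop))
    (measurableSet_lt (by fun_prop) (by fun_prop))
  have hAA : ((volume : Measure (EuclideanSpace ℝ (Fin k))).prod (volume : Measure (EuclideanSpace ℝ (Fin k)))) A =
      ((volume : Measure (EuclideanSpace ℝ (Fin k))).prod (volume : Measure (EuclideanSpace ℝ (Fin k)))) A' := by
    rw [Measure.prod_apply_symm mA, Measure.prod_apply_symm mA']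
    congr 1
    funext y
    by_cases hy : dist y d ≤ ρ
    · have e1 : (fun x => (x, y)) ⁻¹' A = Metric.ball y (dist y d) := by
        ext z; simp [hA, hy, dist_comm y z]
      have e2 : (fun x => (x, y)) ⁻¹' A' = Metric.ball d (dist y d) := by
        ext z; simp [hA', hy]
      rw [e1, e2, Measure.addHaar_ball_center, ← Measure.addHaar_ball_center volume d]
    · have e1 : (fun x => (x, y)) ⁻¹' A = ∅ := by ext z; simp [hA, hy]
      have e2 : (fun x => (x, y)) ⁻¹' A' = ∅ := by ext z; simp [hA', hy]
      rw [e1, e2]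
  have hval := half_vol (n := n) hk d hx
  have hAval : ((volume : Measure (EuclideanSpace ℝ (Fin k))).prod (volume : Measure (EuclideanSpace ℝ (Fin k)))).real A =
      (x / n * Vk k) ^ 2 / 2 := by
    rw [← hval]; unfold Measure.real; rw [hAA]
  have hAfin : ((volume : Measure (EuclideanSpace ℝ (Fin k))).prod (volume : Measure (EuclideanSpace ℝ (Fin k)))) A < ⊤ := by
    rw [hAA]
    refine lt_of_le_of_lt (measure_mono (t := Metric.closedBall d ρ ×ˢ Metric.closedBall d ρ) ?_) ?_
    · rintro ⟨y, w⟩ ⟨h1, h2⟩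
      simp only at h1 h2
      simp only [Set.mem_prod, Metric.mem_closedBall]
      exact ⟨by linarith, h1⟩
    · rw [Measure.prod_prod]
      exact ENNReal.mul_lt_top measure_closedBall_lt_top measure_closedBall_lt_top
  -- slices
  have hslice : ∀ z, ballPart k n (halfS d z) d x =
      x / n * Vk k - (volume (Prod.mk z ⁻¹' A)).toReal := by
    intro z
    have hsub : Prod.mk z ⁻¹' A ⊆ Metric.closedBall d ρ := fun y hy => hy.1
    have : halfS d z ∩ Metric.closedBall d (rad k n x) = Metric.closedBall d ρ \ (Prod.mk z ⁻¹' A) := by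
      ext y
      simp only [halfS, hA, Set.mem_inter_iff, Set.mem_ofPred_eq, Metric.mem_closedBall, Set.mem_sdiff,
        Set.mem_preimage, not_and, not_lt]
      constructor
      · rintro ⟨h1, h2⟩; exact ⟨h2, fun _ => h1⟩
      · rintro ⟨h1, h2⟩; exact ⟨h2 h1, h1⟩
    unfold ballPart
    rw [this, measureReal_sdiff hsub (measurable_prodMk_left mA) measure_closedBall_lt_top.ne,
      vol_ball_rad hk hx]
    rfl
  have hint : Integrable (fun z => (volume (Prod.mk z ⁻¹' A)).toReal)
      (volume : Measure (EuclideanSpace ℝ (Fin k))) :=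
    Measure.integrable_measure_prodMk_left mA hAfin.ne
  have hI : ∫ z, (volume (Prod.mk z ⁻¹' A)).toReal = (x / n * Vk k) ^ 2 / 2 := by
    rw [← hAval]
    unfold Measure.real
    rw [Measure.prod_apply mA, integral_toReal]
    · exact (measurable_measure_prodMk_left mA).aemeasurable
    · exact Measure.ae_measure_lt_top mA hAfin.ne
  simp_rw [hslice]
  rw [integral_sub (by
      rw [integrable_const_iff]; right
      exact ⟨by rw [Measure.restrict_apply_univ]; exact measure_closedBall_lt_top⟩) hint.integrableOn]
  rw [setIntegral_const, smul_eq_mul, mul_comm]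
  congr 1
  rw [← hI]
  apply setIntegral_eq_integral_of_forall_compl_eq_zero
  intro z hz
  have : Prod.mk z ⁻¹' A = ∅ := by
    ext y
    simp only [hA, Set.mem_preimage, Set.mem_ofPred_eq, Set.mem_empty_iff_false, iff_false, not_and, not_lt]
    intro h1
    rw [Metric.mem_closedBall, not_le] at hz
    have := dist_triangle z y d
    rw [dist_comm z y] at this
    linarith
  rw [this]; simp


end

section

def kap (k : ℕ) {n : ℕ} (r : Fin n → ℝ) : ℝ :=
  (Vk k / n) ^ 2 / 2 * ((∑ i, r i ^ 2) / n - ((∑ i, r i) / n) ^ 2)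

def innerK (k : ℕ) : Set (EuclideanSpace ℝ (Fin k)) := {x | ∀ i, x i ∈ Set.Icc (1/4 : ℝ) (3/4)}

lemma rbar_mem {n : ℕ} (hn : 0 < n) {M : ℝ} {r : Fin n → ℝ} (hr : ∀ i, r i ∈ Set.Icc 0 M) :
    (∑ i, r i) / n ∈ Set.Icc 0 M := by
  have hn' : (0 : ℝ) < n := by exact_mod_cast hn
  constructor
  · exact div_nonneg (Finset.sum_nonneg fun i _ => (hr i).1) hn'.le
  · rw [div_le_iff₀ hn']
    calc _ ≤ ∑ i : Fin n, M := Finset.sum_le_sum fun i _ => (hr i).2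
      _ = _ := by simp; ring

lemma inner_ball {k : ℕ} {d y : EuclideanSpace ℝ (Fin k)} (hd : d ∈ innerK k)
    (h : dist y d ≤ 1/4) : y ∈ cubeS k := by
  intro i
  have h1 : |y i - d i| ≤ 1/4 := by
    have := PiLp.norm_apply_le (y - d) i
    rw [dist_eq_norm] at h
    simp only [PiLp.sub_apply, Real.norm_eq_abs] at this
    linarith
  have := hd i
  rw [abs_le] at h1
  exact ⟨by linarith [this.1], by linarith [this.2]⟩

lemma innerK_closed (k : ℕ) : IsClosed (innerK k) := by
  unfold innerK
  rw [Set.ofPred_forall]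
  refine isClosed_iInter fun i => ?_
  exact isClosed_Icc.preimage (by fun_prop : Continuous fun x : EuclideanSpace ℝ (Fin k) => x i)

lemma gap_poly {n : ℕ} (hn : 0 < n) (r : Fin n → ℝ) (a b : ℝ) :
    gap r (fun x => a * x - b * x ^ 2) = b * ((∑ i, r i ^ 2) / n - ((∑ i, r i) / n) ^ 2) := by
  unfold gap
  rw [Finset.sum_sub_distrib, ← Finset.mul_sum, ← Finset.mul_sum]
  ring

lemma half_int {k n : ℕ} (hk : 1 ≤ k) (d : EuclideanSpace ℝ (Fin k)) (R : ℝ) {x : ℝ} (hx : 0 ≤ x) :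
    IntegrableOn (fun z => ballPart k n (halfS d z) d x) (Metric.closedBall d R) := by
  have : IsFiniteMeasure (volume.restrict (Metric.closedBall d R)) :=
    ⟨by rw [Measure.restrict_apply_univ]; exact measure_closedBall_lt_top⟩
  refine Integrable.of_bound (C := x / n * Vk k) ?_ ?_
  · exact ((ballPart_half_meas k n x).comp measurable_prodMk_left).aestronglyMeasurable
  · refine Filter.Eventually.of_forall fun z => ?_
    have := ballPart_bound (n := n) hk (halfS d z) d hx
    rw [Real.norm_of_nonneg this.1]; exact this.2

lemma kappa {k n : ℕ} (hk : 1 ≤ k) (hn : 0 < n) {M : ℝ} {r : Fin n → ℝ}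
    (hr : ∀ i, r i ∈ Set.Icc 0 M)
    {d : EuclideanSpace ℝ (Fin k)} (hd : d ∈ innerK k) (hρ : rad k n M ≤ 1/8) :
    ∫ z, (if dist z d ≤ 2 * rad k n M then gap r (ballPart k n (halfS d z) d) else 0) ∂(unifCube k) =
      kap k r := by
  have hrb := rbar_mem hn hr
  have e1 : (fun z => (if dist z d ≤ 2 * rad k n M then gap r (ballPart k n (halfS d z) d) else 0)) =
      (Metric.closedBall d (2 * rad k n M)).indicator (fun z => gap r (ballPart k n (halfS d z) d)) := by
    funext z
    simp only [Set.indicator_apply, Metric.mem_closedBall]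
  rw [e1, integral_indicator Metric.isClosed_closedBall.measurableSet]
  unfold unifCube
  rw [Measure.restrict_restrict Metric.isClosed_closedBall.measurableSet]
  have e2 : Metric.closedBall d (2 * rad k n M) ∩ {x | ∀ i, x i ∈ Set.Icc (0 : ℝ) 1} =
      Metric.closedBall d (2 * rad k n M) := by
    apply Set.inter_eq_left.2
    intro y hy
    rw [Metric.mem_closedBall] at hy
    exact inner_ball hd (by linarith)
  rw [e2]
  unfold gap
  rw [integral_sub (half_int hk d _ hrb.1)
    ((integrable_finset_sum _ fun i _ => half_int hk d _ (hr i).1).div_const _),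
    integral_div, integral_finset_sum _ fun i _ => half_int hk d _ (hr i).1,
    half_integral hk d hrb.1 hrb.2]
  rw [Finset.sum_congr rfl fun i _ => half_integral hk d (hr i).1 (hr i).2]
  have := gap_poly hn r (Vk k / n * volume.real (Metric.closedBall d (2 * rad k n M)))
    ((Vk k / n) ^ 2 / 2)
  unfold kap
  rw [← this]
  unfold gap
  congr 1
  · ring
  · congr 1
    refine Finset.sum_congr rfl fun i _ => ?_
    ring

lemma gap_nonneg {n : ℕ} (hn : 0 < n) {M : ℝ} {r : Fin n → ℝ} (hr : ∀ i, r i ∈ Set.Icc 0 M)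
    {f : ℝ → ℝ} (hf : ConcaveOn ℝ (Set.Ici 0) f) : 0 ≤ gap r f := by
  have hn' : (0 : ℝ) < n := by exact_mod_cast hn
  have := hf.le_map_sum (t := Finset.univ) (w := fun _ : Fin n => 1 / (n : ℝ)) (p := r)
    (fun _ _ => by positivity) (by simp [hn'.ne']) (fun i _ => (hr i).1)
  simp only [smul_eq_mul, ← Finset.mul_sum] at this
  unfold gap
  have e1 : 1 / (n : ℝ) * ∑ i, r i = (∑ i, r i) / n := by ring
  have e2 : 1 / (n : ℝ) * ∑ i, f (r i) = (∑ i, f (r i)) / n := by ring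
  rw [e1, e2] at this
  linarith

def Om {k n m : ℕ} (M : ℝ) (p : Fin n) (i j : Fin m) (S : Fin n → EuclideanSpace ℝ (Fin k))
    (D : Fin m → EuclideanSpace ℝ (Fin k)) : Prop :=
  (D i ∈ innerK k ∧ (∀ l, l ≠ i → l ≠ j → 4 * rad k n M < dist (D l) (D i)) ∧
    ∀ l, l ≠ p → 4 * rad k n M < dist (S l) (D i)) ∧ dist (D j) (D i) ≤ 2 * rad k n M

lemma gG_gap {k n m : ℕ} (r0 r : Fin n → ℝ) (p : Fin n) (S : Fin n → EuclideanSpace ℝ (Fin k))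
    (D : Fin m → EuclideanSpace ℝ (Fin k)) :
    gap r (gG r0 p S D) = ∑ i ∈ gT r0 p S D,
      gap r (ballPart k n (cubeS k ∩ vcell (gT r0 p S D) D i) (D i)) := by
  unfold gap gG
  simp only [near_eq_sum]
  rw [Finset.sum_sub_distrib, ← Finset.sum_div, Finset.sum_comm]

lemma Om_crit {k n m : ℕ} {M : ℝ} (hM : 0 ≤ M) {p : Fin n} {i j : Fin m}
    {S : Fin n → EuclideanSpace ℝ (Fin k)}
    {D : Fin m → EuclideanSpace ℝ (Fin k)} {r0 : Fin n → ℝ} (hr0 : ∀ i, r0 i ∈ Set.Icc 0 M)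
    (h : Om M p i j S D) : i ∈ gT r0 p S D ∧ j ∈ gT r0 p S D := by
  obtain ⟨⟨h1, h2, h3⟩, h4⟩ := h
  have hρ := rad_nonneg (k := k) (n := n) hM
  constructor
  · apply isolated_crit
    intro l hl hadj
    have := h3 l hl
    have hm := rad_mono (k := k) (n := n) (hr0 l).1 (hr0 l).2
    change dist (S l) (D i) ≤ rad k n (r0 l) at hadj
    linarith
  · apply isolated_crit
    intro l hl hadj
    have := h3 l hl
    have hm := rad_mono (k := k) (n := n) (hr0 l).1 (hr0 l).2
    change dist (S l) (D j) ≤ rad k n (r0 l) at hadj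
    have := dist_triangle (S l) (D j) (D i)
    linarith

lemma Om_cell {k n m : ℕ} {M : ℝ} (hM : 0 ≤ M) (hρ8 : rad k n M ≤ 1/8) {p : Fin n} {i j : Fin m}
    (hij : i < j)
    {S : Fin n → EuclideanSpace ℝ (Fin k)}
    {D : Fin m → EuclideanSpace ℝ (Fin k)} {r0 : Fin n → ℝ} (hr0 : ∀ i, r0 i ∈ Set.Icc 0 M)
    (h : Om M p i j S D) {x : ℝ} (hx : x ∈ Set.Icc 0 M) :
    ballPart k n (cubeS k ∩ vcell (gT r0 p S D) D i) (D i) x =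
      ballPart k n (halfS (D i) (D j)) (D i) x := by
  have hc := Om_crit hM hr0 h
  obtain ⟨⟨h1, h2, h3⟩, h4⟩ := h
  have hρ := rad_nonneg (k := k) (n := n) hM
  have hm := rad_mono (k := k) (n := n) hx.1 hx.2
  unfold ballPart
  congr 1
  ext y
  simp only [Set.mem_inter_iff, Metric.mem_closedBall, vcell, halfS, Set.mem_ofPred_eq]
  constructor
  · rintro ⟨⟨_, h5⟩, h6⟩
    exact ⟨(h5 j hc.2).1, h6⟩
  · rintro ⟨h5, h6⟩
    refine ⟨⟨inner_ball h1 (by linarith), fun l hl => ?_⟩, h6⟩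
    by_cases hli : l = i
    · subst hli; exact ⟨le_rfl, fun h => absurd h (lt_irrefl _)⟩
    by_cases hlj : l = j
    · subst hlj; exact ⟨h5, fun h => absurd h (not_lt.2 hij.le)⟩
    · have := h2 l hli hlj
      have ht := dist_triangle (D l) y (D i)
      rw [dist_comm (D l) y] at ht
      exact ⟨by linarith, fun _ => by linarith⟩

lemma gap_congr {n : ℕ} (hn : 0 < n) {M : ℝ} {r : Fin n → ℝ} (hr : ∀ i, r i ∈ Set.Icc 0 M)
    {f g : ℝ → ℝ} (h : ∀ x ∈ Set.Icc 0 M, f x = g x) : gap r f = gap r g := by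
  unfold gap
  rw [h _ (rbar_mem hn hr), Finset.sum_congr rfl fun i _ => h _ (hr i)]

lemma pointwise_gap {k n m : ℕ} (hk : 1 ≤ k) (hn : 0 < n) {M : ℝ} (hM : 0 ≤ M)
    (hρ8 : rad k n M ≤ 1/8) {r0 r : Fin n → ℝ} (hr0 : ∀ i, r0 i ∈ Set.Icc 0 M)
    (hr : ∀ i, r i ∈ Set.Icc 0 M) (p : Fin n)
    (S : Fin n → EuclideanSpace ℝ (Fin k)) (D : Fin m → EuclideanSpace ℝ (Fin k))
    (hD : ∀ i, D i ∈ cubeS k) :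
    ∑ i : Fin m, ∑ j : Fin m, (if i < j then (if Om M p i j S D then
      gap r (ballPart k n (halfS (D i) (D j)) (D i)) else 0) else 0) ≤ gap r (gG r0 p S D) := by
  rw [gG_gap]
  have hnn : ∀ i, 0 ≤ gap r (ballPart k n (cubeS k ∩ vcell (gT r0 p S D) D i) (D i)) := fun i =>
    gap_nonneg hn hr (ballPart_concave hk (vcell_meas _ _ _) _ (vcell_star _ _ _ (hD i)))
  rw [← Finset.sum_filter_add_sum_filter_not Finset.univ (fun i => i ∈ gT r0 p S D)]
  rw [Finset.filter_mem_eq_inter, Finset.univ_inter]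
  have hz : ∑ i with i ∉ gT r0 p S D, ∑ j : Fin m, (if i < j then (if Om M p i j S D then
      gap r (ballPart k n (halfS (D i) (D j)) (D i)) else 0) else 0) = 0 := by
    refine Finset.sum_eq_zero fun i hi => Finset.sum_eq_zero fun j _ => ?_
    rw [Finset.mem_filter] at hi
    split_ifs with h1 h2
    · exact absurd (Om_crit hM hr0 h2).1 hi.2
    · rfl
    · rfl
  rw [hz, add_zero]
  refine Finset.sum_le_sum fun i _ => ?_
  by_cases hex : ∃ j, i < j ∧ Om M p i j S D
  · obtain ⟨j, hij, hj⟩ := hex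
    rw [Finset.sum_eq_single j]
    · rw [if_pos hij, if_pos hj]
      exact (gap_congr hn hr fun x hx => (Om_cell hM hρ8 hij hr0 hj hx).symm).le
    · intro l _ hl
      split_ifs with h1 h2
      · exfalso
        have h3 := hj.1.2.1 l (ne_of_gt h1) hl
        have h4 := h2.2
        have := rad_nonneg (k := k) (n := n) hM
        linarith
      · rfl
      · rfl
    · simp
  · rw [Finset.sum_eq_zero]
    · exact hnn i
    · intro j _
      split_ifs with h1 h2
      · exact absurd ⟨j, h1, h2⟩ hex
      · rfl
      · rfl


end

section

def OmA {k n m : ℕ} (M : ℝ) (p : Fin n) (i j : Fin m) (S : Fin n → EuclideanSpace ℝ (Fin k))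
    (D : Fin m → EuclideanSpace ℝ (Fin k)) : Prop :=
  D i ∈ innerK k ∧ (∀ l, l ≠ i → l ≠ j → 4 * rad k n M < dist (D l) (D i)) ∧
    ∀ l, l ≠ p → 4 * rad k n M < dist (S l) (D i)

lemma ms_all {α ι : Type*} [Countable ι] [MeasurableSpace α] {P : ι → α → Prop}
    (h : ∀ i, MeasurableSet {a | P i a}) : MeasurableSet {a | ∀ i, P i a} := by
  rw [Set.ofPred_forall]; exact MeasurableSet.iInter h

lemma ms_imp {α : Type*} {c : Prop} [MeasurableSpace α] {P : α → Prop}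
    (h : MeasurableSet {a | P a}) : MeasurableSet {a | c → P a} := by
  by_cases hc : c
  · simpa [hc] using h
  · simp [hc]

lemma OmA_meas {k n m : ℕ} (M : ℝ) (p : Fin n) (i j : Fin m) :
    MeasurableSet {q : (Fin n → EuclideanSpace ℝ (Fin k)) × (Fin m → EuclideanSpace ℝ (Fin k)) |
      OmA M p i j q.1 q.2} := by
  refine ms_and ?_ (ms_and ?_ ?_)
  · exact (by fun_prop : Measurable fun q : (Fin n → EuclideanSpace ℝ (Fin k)) ×
      (Fin m → EuclideanSpace ℝ (Fin k)) => q.2 i) (innerK_closed k).measurableSet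
  · refine ms_all fun l => ms_imp (ms_imp ?_)
    exact measurableSet_lt (by fun_prop) (by fun_prop)
  · refine ms_all fun l => ms_imp ?_
    exact measurableSet_lt (by fun_prop) (by fun_prop)

lemma Om_meas {k n m : ℕ} (M : ℝ) (p : Fin n) (i j : Fin m) :
    MeasurableSet {q : (Fin n → EuclideanSpace ℝ (Fin k)) × (Fin m → EuclideanSpace ℝ (Fin k)) |
      Om M p i j q.1 q.2} := 
  ms_and (OmA_meas M p i j) (measurableSet_le (by fun_prop) (by fun_prop))

lemma far_prob {k n : ℕ} (hk : 1 ≤ k) {M : ℝ} (hM : 0 ≤ M) (d : EuclideanSpace ℝ (Fin k)) :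
    1 - 4 ^ k * M / n * Vk k ≤ (unifCube k).real {y | 4 * rad k n M < dist y d} := by
  have h4 : 4 * rad k n M = rad k n (4 ^ k * M) := by
    rw [rad_mul (by positivity) hM]
    congr 1
    rw [← Real.rpow_natCast, ← Real.rpow_mul (by norm_num)]
    have : (k : ℝ) ≠ 0 := by positivity
    field_simp
    simp
  have hc : {y | 4 * rad k n M < dist y d} = (Metric.closedBall d (4 * rad k n M))ᶜ := by
    ext y; simp
  rw [hc, probReal_compl_eq_one_sub Metric.isClosed_closedBall.measurableSet, h4,
    unif_real Metric.isClosed_closedBall.measurableSet,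
    ← vol_ball_rad (n := n) hk (by positivity : (0:ℝ) ≤ 4 ^ k * M) d]
  have : volume.real (cubeS k ∩ Metric.closedBall d (rad k n (4 ^ k * M))) ≤
      volume.real (Metric.closedBall d (rad k n (4 ^ k * M))) :=
    measureReal_mono Set.inter_subset_right measure_closedBall_lt_top.ne
  linarith

def p0 (k n m : ℕ) (M : ℝ) : ℝ :=
  (1 / 2) ^ k * Real.exp (-(2 * (4 ^ k * M * Vk k) * (1 + m / n)))

lemma one_sub_ge {t : ℝ} (h0 : 0 ≤ t) (h1 : t ≤ 1/2) : Real.exp (-(2 * t)) ≤ 1 - t := by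
  have h2 := Real.add_one_le_exp (2 * t)
  have h3 : Real.exp (-(2*t)) * Real.exp (2 * t) = 1 := by rw [← Real.exp_add]; simp
  have h4 := Real.exp_pos (-(2*t))
  have : 1 ≤ (1 - t) * Real.exp (2*t) := by nlinarith
  nlinarith [Real.exp_pos (2*t)]

lemma innerK_prob (k : ℕ) : (unifCube k).real (innerK k) = (1/2) ^ k := by
  rw [unif_real (innerK_closed k).measurableSet]
  have : cubeS k ∩ innerK k = innerK k := by
    apply Set.inter_eq_right.2
    intro x hx i
    have := hx i
    exact ⟨by linarith [this.1], by linarith [this.2]⟩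
  rw [this]
  unfold Measure.real innerK
  rw [vol_box, ENNReal.toReal_pow, ENNReal.toReal_ofReal (by norm_num)]
  norm_num

lemma OmA_prob {k n m : ℕ} (hk : 1 ≤ k) (hn : 0 < n) {M : ℝ} (hM : 0 ≤ M)
    (hsm : 4 ^ k * M / n * Vk k ≤ 1/2) (p : Fin n) (i j : Fin m) :
    p0 k n m M ≤ ((pU k n).prod (pU k m)).real {q | OmA M p i j q.1 q.2} := by
  have hn' : (0 : ℝ) < n := by exact_mod_cast hn
  have hV := Vk_pos k
  set t := 4 ^ k * M / n * Vk k with ht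
  have ht0 : 0 ≤ t := by positivity
  let Φ : ((Fin n → EuclideanSpace ℝ (Fin k)) × (Fin m → EuclideanSpace ℝ (Fin k))) ×
      EuclideanSpace ℝ (Fin k) → (Fin n → EuclideanSpace ℝ (Fin k)) × (Fin m → EuclideanSpace ℝ (Fin k)) :=
    fun w => (w.1.1, Function.update w.1.2 i w.2)
  have hΦ : MeasurePreserving Φ (((pU k n).prod (pU k m)).prod (unifCube k))
      ((pU k n).prod (pU k m)) :=
    ((MeasurePreserving.id (pU k n)).prod (mp_update (unifCube k) i)).comp
      (measurePreserving_prodAssoc (pU k n) (pU k m) (unifCube k))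
  let far : EuclideanSpace ℝ (Fin k) → Set (EuclideanSpace ℝ (Fin k)) :=
    fun d => {y | 4 * rad k n M < dist y d}
  let E : Set (((Fin n → EuclideanSpace ℝ (Fin k)) × (Fin m → EuclideanSpace ℝ (Fin k))) ×
      EuclideanSpace ℝ (Fin k)) := {w | w.2 ∈ innerK k ∧ (∀ l, 4 * rad k n M < dist (w.1.1 l) w.2) ∧
        ∀ l, 4 * rad k n M < dist (w.1.2 l) w.2}
  have mE : MeasurableSet E := by
    refine ms_and ?_ (ms_and ?_ ?_)
    · exact measurable_snd (innerK_closed k).measurableSet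
    · refine ms_all fun l => measurableSet_lt (by fun_prop) (by fun_prop)
    · refine ms_all fun l => measurableSet_lt (by fun_prop) (by fun_prop)
  have hsub : E ⊆ Φ ⁻¹' {q | OmA M p i j q.1 q.2} := by
    rintro ⟨⟨S, D⟩, d⟩ ⟨h1, h2, h3⟩
    simp only at h1 h2 h3
    simp only [Set.mem_preimage, Set.mem_ofPred_eq, OmA, Φ, Function.update_self]
    refine ⟨h1, fun l hl _ => ?_, fun l _ => h2 l⟩
    rw [Function.update_of_ne hl]
    exact h3 l
  have hfar : ∀ d, ENNReal.ofReal (Real.exp (-(2 * t))) ≤ unifCube k (far d) := by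
    intro d
    have h1 := far_prob (n := n) hk hM d
    have h2 := one_sub_ge ht0 hsm
    apply ENNReal.ofReal_le_of_le_toReal
    change _ ≤ (unifCube k).real _
    linarith
  have hslice : ∀ d ∈ innerK k, ENNReal.ofReal (Real.exp (-(2 * t))) ^ (n + m) ≤
      ((pU k n).prod (pU k m)) ((fun x => (x, d)) ⁻¹' E) := by
    intro d hd
    have : (fun x => (x, d)) ⁻¹' E = (Set.univ.pi fun _ => far d) ×ˢ (Set.univ.pi fun _ => far d) := by
      ext ⟨S, D⟩
      simp [E, far, hd]
    rw [this, Measure.prod_prod, Measure.pi_pi, Measure.pi_pi, pow_add]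
    simp only [Finset.prod_const, Finset.card_univ, Fintype.card_fin]
    exact mul_le_mul' (pow_le_pow_left' (hfar d) _) (pow_le_pow_left' (hfar d) _)
  have hmain : ENNReal.ofReal (Real.exp (-(2 * t))) ^ (n + m) * unifCube k (innerK k) ≤
      ((pU k n).prod (pU k m)) {q | OmA M p i j q.1 q.2} := by
    rw [← hΦ.measure_preimage (OmA_meas M p i j).nullMeasurableSet]
    refine le_trans ?_ (measure_mono hsub)
    rw [Measure.prod_apply_symm mE]
    calc _ = ∫⁻ d in innerK k, ENNReal.ofReal (Real.exp (-(2 * t))) ^ (n + m) ∂(unifCube k) := by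
          rw [setLIntegral_const]
      _ ≤ ∫⁻ d in innerK k, ((pU k n).prod (pU k m)) ((fun x => (x, d)) ⁻¹' E) ∂(unifCube k) :=
          setLIntegral_mono' (innerK_closed k).measurableSet hslice
      _ ≤ _ := setLIntegral_le_lintegral _ _
  have h5 := ENNReal.toReal_mono (measure_ne_top _ _) hmain
  rw [ENNReal.toReal_mul, ENNReal.toReal_pow, ENNReal.toReal_ofReal (Real.exp_pos _).le] at h5
  change _ * (unifCube k).real (innerK k) ≤ _ at h5
  rw [innerK_prob, ← Real.exp_nat_mul] at h5
  unfold p0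
  rw [mul_comm]
  change _ ≤ (((pU k n).prod (pU k m)) {q | OmA M p i j q.1 q.2}).toReal
  convert h5 using 3
  rw [ht]; push_cast; field_simp

lemma gap_bound {k n : ℕ} (hk : 1 ≤ k) (hn : 0 < n) {M : ℝ} {r : Fin n → ℝ}
    (hr : ∀ i, r i ∈ Set.Icc 0 M) (C : Set (EuclideanSpace ℝ (Fin k))) (d : EuclideanSpace ℝ (Fin k)) :
    |gap r (ballPart k n C d)| ≤ M / n * Vk k := by
  have hn' : (0 : ℝ) < n := by exact_mod_cast hn
  have hV := Vk_pos k
  have hb : ∀ x ∈ Set.Icc 0 M, 0 ≤ ballPart k n C d x ∧ ballPart k n C d x ≤ M / n * Vk k := by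
    intro x hx
    have := ballPart_bound (n := n) hk C d hx.1
    refine ⟨this.1, this.2.trans ?_⟩
    have := hx.2
    gcongr
  have h1 := hb _ (rbar_mem hn hr)
  have h2 : 0 ≤ (∑ i, ballPart k n C d (r i)) / n :=
    div_nonneg (Finset.sum_nonneg fun i _ => (hb _ (hr i)).1) hn'.le
  have h3 : (∑ i, ballPart k n C d (r i)) / n ≤ M / n * Vk k := by
    rw [div_le_iff₀ hn']
    calc _ ≤ ∑ i : Fin n, M / n * Vk k := Finset.sum_le_sum fun i _ => (hb _ (hr i)).2
      _ = _ := by simp; ring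
  unfold gap
  rw [abs_le]
  constructor <;> linarith

def Fij {k n m : ℕ} (M : ℝ) (r : Fin n → ℝ) (p : Fin n) (i j : Fin m)
    (q : (Fin n → EuclideanSpace ℝ (Fin k)) × (Fin m → EuclideanSpace ℝ (Fin k))) : ℝ :=
  if Om M p i j q.1 q.2 then gap r (ballPart k n (halfS (q.2 i) (q.2 j)) (q.2 i)) else 0

lemma bph_comp {α : Type*} [MeasurableSpace α] {k : ℕ} (n : ℕ) (x : ℝ) {a b : α → EuclideanSpace ℝ (Fin k)}
    (ha : Measurable a) (hb : Measurable b) :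
    Measurable fun q => ballPart k n (halfS (a q) (b q)) (a q) x := by
  have h1 := ballPart_half_meas k n x
  have h2 := ha.prodMk hb
  generalize hF : (fun q : EuclideanSpace ℝ (Fin k) × EuclideanSpace ℝ (Fin k) =>
      ballPart k n (halfS q.1 q.2) q.1 x) = F at h1
  have h3 : (fun q => ballPart k n (halfS (a q) (b q)) (a q) x) = fun q => F (a q, b q) := by
    subst hF; rfl
  rw [h3]
  exact h1.comp h2

lemma Fij_meas {k n m : ℕ} (M : ℝ) (r : Fin n → ℝ) (p : Fin n) (i j : Fin m) :
    Measurable (Fij (k := k) M r p i j) := by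
  have ha : Measurable fun q : (Fin n → EuclideanSpace ℝ (Fin k)) ×
      (Fin m → EuclideanSpace ℝ (Fin k)) => q.2 i := by fun_prop
  have hb : Measurable fun q : (Fin n → EuclideanSpace ℝ (Fin k)) ×
      (Fin m → EuclideanSpace ℝ (Fin k)) => q.2 j := by fun_prop
  have h := fun x => bph_comp n x ha hb
  have h2 : Measurable fun q : (Fin n → EuclideanSpace ℝ (Fin k)) ×
      (Fin m → EuclideanSpace ℝ (Fin k)) => gap r (ballPart k n (halfS (q.2 i) (q.2 j)) (q.2 i)) :=
    Measurable.sub (h _) ((Finset.measurable_sum _ fun l _ => h (r l)).div_const _)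
  exact Measurable.ite (Om_meas M p i j) h2 measurable_const

lemma Fij_bound {k n m : ℕ} (hk : 1 ≤ k) (hn : 0 < n) {M : ℝ} (hM : 0 ≤ M) {r : Fin n → ℝ}
    (hr : ∀ i, r i ∈ Set.Icc 0 M) (p : Fin n) (i j : Fin m) (q) :
    |Fij (k := k) M r p i j q| ≤ M / n * Vk k := by
  unfold Fij
  split_ifs
  · exact gap_bound hk hn hr _ _
  · have := Vk_pos k
    rw [abs_zero]; positivity

lemma Fij_int {k n m : ℕ} (hk : 1 ≤ k) (hn : 0 < n) {M : ℝ} (hM : 0 ≤ M) {r : Fin n → ℝ}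
    (hr : ∀ i, r i ∈ Set.Icc 0 M) (p : Fin n) (i j : Fin m) :
    Integrable (Fij (k := k) M r p i j) ((pU k n).prod (pU k m)) :=
  Integrable.of_bound (Fij_meas M r p i j).aestronglyMeasurable (M / n * Vk k)
    (Filter.Eventually.of_forall fun q => Fij_bound hk hn hM hr p i j q)

lemma Fij_integral {k n m : ℕ} (hk : 1 ≤ k) (hn : 0 < n) {M : ℝ} (hM : 0 ≤ M) {r : Fin n → ℝ}
    (hr : ∀ i, r i ∈ Set.Icc 0 M) (hρ8 : rad k n M ≤ 1/8) (p : Fin n) {i j : Fin m} (hij : i ≠ j) :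
    ∫ q, Fij (k := k) M r p i j q ∂((pU k n).prod (pU k m)) =
      kap k r * ((pU k n).prod (pU k m)).real {q | OmA M p i j q.1 q.2} := by
  have hI : Integrable (({q : (Fin n → EuclideanSpace ℝ (Fin k)) × (Fin m → EuclideanSpace ℝ (Fin k)) |
      OmA M p i j q.1 q.2}).indicator (fun _ => kap k r)) ((pU k n).prod (pU k m)) :=
    (integrable_const _).indicator (OmA_meas M p i j)
  have h2 := integral_indicator_const (μ := (pU k n).prod (pU k m)) (kap k r) (OmA_meas M p i j)
  rw [smul_eq_mul, mul_comm] at h2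
  rw [← h2, integral_prod _ (Fij_int hk hn hM hr p i j), integral_prod _ hI]
  congr 1
  funext S
  rw [integral_resample (unifCube k) j (fun D => Fij (k := k) M r p i j (S, D))
    ((Fij_meas M r p i j).comp measurable_prodMk_left) (M / n * Vk k)
    (fun D => Fij_bound hk hn hM hr p i j _)]
  congr 1
  funext D
  have hOm : ∀ z, Om M p i j S (Function.update D j z) ↔
      OmA M p i j S D ∧ dist z (D i) ≤ 2 * rad k n M := by
    intro z
    unfold Om OmA
    rw [Function.update_of_ne hij, Function.update_self]
    have : (∀ l, l ≠ i → l ≠ j → 4 * rad k n M < dist (Function.update D j z l) (D i)) ↔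
        (∀ l, l ≠ i → l ≠ j → 4 * rad k n M < dist (D l) (D i)) := by
      refine forall_congr' fun l => forall_congr' fun _ => forall_congr' fun hl => ?_
      rw [Function.update_of_ne hl]
    rw [this]
  unfold Fij
  simp only [hOm, Function.update_of_ne hij, Function.update_self]
  by_cases hA : OmA M p i j S D
  · have hA' : (S, D) ∈ {q : (Fin n → EuclideanSpace ℝ (Fin k)) × (Fin m → EuclideanSpace ℝ (Fin k)) |
      OmA M p i j q.1 q.2} := hA
    rw [Set.indicator_of_mem hA']
    simp only [hA, true_and]
    exact kappa hk hn hr hA.1 hρ8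
  · have hA' : (S, D) ∉ {q : (Fin n → EuclideanSpace ℝ (Fin k)) × (Fin m → EuclideanSpace ℝ (Fin k)) |
      OmA M p i j q.1 q.2} := hA
    rw [Set.indicator_of_notMem hA']
    simp [hA]

lemma var_ge {n : ℕ} (hn : 0 < n) (r : Fin n → ℝ) :
    ((∑ i, |r i - (∑ j, r j) / n|) / n) ^ 2 ≤ (∑ i, r i ^ 2) / n - ((∑ i, r i) / n) ^ 2 := by
  have hn' : (0 : ℝ) < n := by exact_mod_cast hn
  set b := (∑ j, r j) / n with hb
  have h1 := sq_sum_le_card_mul_sum_sq (s := Finset.univ) (f := fun i => |r i - b|)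
  simp only [sq_abs, Finset.card_univ, Fintype.card_fin] at h1
  have h2 : ∑ i, (r i - b) ^ 2 = ∑ i, r i ^ 2 - n * b ^ 2 := by
    have : ∑ i, r i = n * b := by rw [hb]; field_simp
    simp only [sub_sq, Finset.sum_add_distrib, Finset.sum_sub_distrib, ← Finset.mul_sum,
      ← Finset.sum_mul, this]
    simp
    ring
  rw [h2] at h1
  rw [div_pow, div_le_iff₀ (by positivity)]
  calc _ ≤ _ := h1
    _ = _ := by field_simp

lemma muU_gap {k n m : ℕ} (hk : 1 ≤ k) (hn : 0 < n) {M : ℝ} (hM : 0 ≤ M) {r r0 : Fin n → ℝ}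
    (hr0 : ∀ i, r0 i ∈ Set.Icc 0 M)
    (hr : ∀ i, r i ∈ Set.Icc 0 M) (hρ8 : rad k n M ≤ 1/8)
    (hsm : 4 ^ k * M / n * Vk k ≤ 1/2) (hm : 2 ≤ m) (p : Fin n) :
    (m : ℝ) ^ 2 / 4 * p0 k n m M * kap k r ≤
      gap r (fun x => muU k n m (Function.update r0 p x)) := by
  have hkap : 0 ≤ kap k r := by
    unfold kap
    have := (sq_nonneg _).trans (var_ge hn r)
    positivity
  have hg : gap r (fun x => muU k n m (Function.update r0 p x)) =
      ∫ q, gap r (gG r0 p q.1 q.2) ∂((pU k n).prod (pU k m)) := by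
    have hn' : (n : ℝ) ≠ 0 := by positivity
    unfold gap
    rw [integral_sub (gG_int r0 p _) ((integrable_finsetSum _ fun i _ => gG_int r0 p (r i)).div_const _),
      integral_div, integral_finsetSum _ fun i _ => gG_int r0 p (r i)]
    simp only [muU_rep]
    rw [Finset.sum_add_distrib]
    simp
    field_simp
    ring
  rw [hg]
  have hI : Integrable (fun q => gap r (gG r0 p q.1 q.2)) ((pU k n).prod (pU k m)) := by
    unfold gap
    exact (gG_int r0 p _).sub ((integrable_finsetSum _ fun i _ => gG_int r0 p (r i)).div_const _)
  have hIJ : ∀ i j, Integrable (fun q => if i < j then Fij (k := k) M r p i j q else 0)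
      ((pU k n).prod (pU k m)) := by
    intro i j
    split_ifs
    · exact Fij_int hk hn hM hr p i j
    · exact integrable_zero _ _ _
  calc _ ≤ ∑ i : Fin m, ∑ j : Fin m, (if i < j then kap k r * p0 k n m M else 0) := by
        have hp : 0 ≤ p0 k n m M := by unfold p0; positivity
        have hc : ∑ i : Fin m, ∑ j : Fin m, (if i < j then kap k r * p0 k n m M else 0) =
            (m * (m - 1) / 2 : ℝ) * (kap k r * p0 k n m M) := by
          have e1 : ∀ i : Fin m, ∑ j : Fin m, (if i < j then kap k r * p0 k n m M else 0) =
              ((m : ℝ) - 1 - (i : ℕ)) * (kap k r * p0 k n m M) := by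
            intro i
            rw [← Finset.sum_filter, Finset.sum_const, nsmul_eq_mul]
            congr 1
            have : Finset.univ.filter (fun j => i < j) = Finset.Ioi i := by ext; simp
            rw [this, Fin.card_Ioi]
            have := i.2
            rw [Nat.cast_sub (by omega), Nat.cast_sub (by omega)]
            simp
          rw [Finset.sum_congr rfl fun i _ => e1 i, ← Finset.sum_mul]
          congr 1
          rw [Finset.sum_sub_distrib]
          have := Fin.sum_univ_eq_sum_range (fun i => (i : ℝ)) m
          rw [this]
          have h2 := Finset.sum_range_id_mul_two m
          have h3 : (∑ i ∈ Finset.range m, (i : ℝ)) * 2 = m * (m - 1) := by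
            rw [← Nat.cast_sum]
            have : ((m : ℝ) - 1) = ((m - 1 : ℕ) : ℝ) := by rw [Nat.cast_sub (by omega)]; simp
            rw [this]
            exact_mod_cast h2
          simp
          linarith
        rw [hc]
        have hm' : (2 : ℝ) ≤ m := by exact_mod_cast hm
        have : (m : ℝ) ^ 2 / 4 ≤ m * (m - 1) / 2 := by nlinarith
        have := mul_le_mul_of_nonneg_right this (mul_nonneg hkap hp)
        linarith
    _ ≤ ∑ i : Fin m, ∑ j : Fin m, ∫ q, (if i < j then Fij (k := k) M r p i j q else 0)
          ∂((pU k n).prod (pU k m)) := by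
        refine Finset.sum_le_sum fun i _ => Finset.sum_le_sum fun j _ => ?_
        split_ifs with h
        · rw [Fij_integral hk hn hM hr hρ8 p h.ne]
          exact mul_le_mul_of_nonneg_left (OmA_prob hk hn hM hsm p i j) hkap
        · simp
    _ = ∫ q, ∑ i : Fin m, ∑ j : Fin m, (if i < j then Fij (k := k) M r p i j q else 0)
          ∂((pU k n).prod (pU k m)) := by
        rw [integral_finsetSum _ fun i _ => integrable_finsetSum _ fun j _ => hIJ i j]
        refine Finset.sum_congr rfl fun i _ => ?_
        rw [integral_finsetSum _ fun j _ => hIJ i j]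
    _ ≤ _ := by
        refine integral_mono_ae (integrable_finsetSum _ fun i _ => integrable_finsetSum _ fun j _ => hIJ i j) hI ?_
        filter_upwards [ae_cube' k n m] with q hq
        exact pointwise_gap hk hn hM hρ8 hr0 hr p q.1 q.2 hq


end

section

lemma muU_perm {k n m : ℕ} (r : Fin n → ℝ) (σ : Equiv.Perm (Fin n)) :
    muU k n m (r ∘ σ) = muU k n m r := by
  have hmp := measurePreserving_piCongrLeft (fun _ : Fin n => unifCube k) σ.symm
  unfold muU
  rw [← hmp.integral_comp' (g := fun S : Fin n → EuclideanSpace ℝ (Fin k) =>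
    ∫ D : Fin m → EuclideanSpace ℝ (Fin k),
      (matchingNumber (fun i j => adjOf k n S (r ∘ σ) D i j) : ℝ) ∂(Measure.pi fun _ => unifCube k))]
  congr 1
  funext S
  congr 1
  funext D
  congr 1
  rw [← mn_perm (fun i j => adjOf k n S r D i j) σ]
  congr 1
  funext i j
  unfold adjOf
  have : (MeasurableEquiv.piCongrLeft (fun _ : Fin n => EuclideanSpace ℝ (Fin k)) σ.symm) S i = S (σ i) := by
    have := MeasurableEquiv.piCongrLeft_apply_apply (β := fun _ : Fin n => EuclideanSpace ℝ (Fin k)) σ.symm S (σ i)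
    simpa using this
  rw [this]
  rfl

lemma fin_resample {ι α : Type*} [Fintype ι] [DecidableEq ι] [Fintype α] (p : ι) (G : (ι → α) → ℝ) :
    (Fintype.card α : ℝ) * ∑ τ, G τ = ∑ τ : ι → α, ∑ a : α, G (Function.update τ p a) := by
  have e1 : (Fintype.card α : ℝ) * ∑ τ, G τ = ∑ w : (ι → α) × α, G w.1 := by
    rw [Fintype.sum_prod_type]
    simp [Finset.mul_sum]
  rw [e1, ← Fintype.sum_prod_type (f := fun w : (ι → α) × α => G (Function.update w.1 p w.2))]
  let e : (ι → α) × α → (ι → α) × α := fun w => (Function.update w.1 p w.2, w.1 p)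
  have he : Function.Involutive e := by
    rintro ⟨τ, a⟩
    simp [e]
  refine (Fintype.sum_equiv he.toPerm _ _ ?_).symm
  intro w
  rfl

lemma path_bound {n : ℕ} (hn : 0 < n) {M g : ℝ} {r : Fin n → ℝ} (hr : ∀ i, r i ∈ Set.Icc 0 M)
    (F : (Fin n → ℝ) → ℝ)
    (H1 : ∀ r0 : Fin n → ℝ, (∀ i, r0 i ∈ Set.Icc 0 M) → ∀ p,
      g ≤ gap r (fun x => F (Function.update r0 p x))) (s : Finset (Fin n)) :
    ∑ τ : Fin n → Fin n, F (fun i => if i ∈ s then r (τ i) else (∑ j, r j) / n) ≤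
      Fintype.card (Fin n → Fin n) * (F (fun _ => (∑ j, r j) / n) - s.card * g) := by
  have hn' : (0 : ℝ) < n := by exact_mod_cast hn
  have hrb := rbar_mem hn hr
  set b := (∑ j, r j) / n with hb
  induction s using Finset.induction_on with
  | empty => simp
  | insert p s hp ih =>
    have h := fin_resample p (fun τ : Fin n → Fin n => F (fun i => if i ∈ insert p s then r (τ i) else b))
    have h2 : ∀ τ : Fin n → Fin n, ∑ a : Fin n,
        F (fun i => if i ∈ insert p s then r (Function.update τ p a i) else b) ≤
        n * (F (fun i => if i ∈ s then r (τ i) else b) - g) := by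
      intro τ
      have hv : ∀ i, (fun i => if i ∈ s then r (τ i) else b) i ∈ Set.Icc 0 M := by
        intro i
        simp only
        split_ifs
        · exact hr _
        · exact hrb
      have h3 := H1 _ hv p
      unfold gap at h3
      simp only [← hb] at h3
      have e1 : Function.update (fun i => if i ∈ s then r (τ i) else b) p b =
          fun i => if i ∈ s then r (τ i) else b := by
        funext i
        by_cases hi : i = p
        · subst hi; simp [hp]
        · rw [Function.update_of_ne hi]
      have e2 : ∀ a, (fun i => if i ∈ insert p s then r (Function.update τ p a i) else b) =
          Function.update (fun i => if i ∈ s then r (τ i) else b) p (r a) := by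
        intro a
        funext i
        by_cases hi : i = p
        · subst hi; simp
        · rw [Function.update_of_ne hi, Function.update_of_ne hi]
          simp [hi]
      rw [e1] at h3
      simp only [e2]
      have h4 : (∑ i, F (Function.update (fun i => if i ∈ s then r (τ i) else b) p (r i))) / n ≤
        F (fun i => if i ∈ s then r (τ i) else b) - g := by linarith
      rw [div_le_iff₀ hn'] at h4
      linarith
    have h5 := Finset.sum_le_sum (s := Finset.univ) fun τ _ => h2 τ
    rw [← h, ← Finset.mul_sum, Fintype.card_fin] at h5
    have h6 := le_of_mul_le_mul_left h5 hn'
    rw [Finset.sum_sub_distrib] at h6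
    simp only [Finset.sum_const, Finset.card_univ, nsmul_eq_mul] at h6
    rw [Finset.card_insert_of_notMem hp]
    push_cast at *
    linarith

lemma lip_bound {n : ℕ} {L : ℝ} (F : (Fin n → ℝ) → ℝ)
    (H2 : ∀ (r : Fin n → ℝ) p x y, 0 ≤ x → 0 ≤ y →
      |F (Function.update r p x) - F (Function.update r p y)| ≤ L * |x - y|)
    (a b : Fin n → ℝ) (ha : ∀ i, 0 ≤ a i) (hb : ∀ i, 0 ≤ b i) :
    F a - F b ≤ L * ∑ i, |a i - b i| := by
  have key : ∀ s : Finset (Fin n), F (s.piecewise a b) - F b ≤ L * ∑ i ∈ s, |a i - b i| := by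
    intro s
    induction s using Finset.induction_on with
    | empty => simp
    | insert p s hp ih =>
      rw [Finset.piecewise_insert, Finset.sum_insert hp]
      have h := (abs_le.1 (H2 (s.piecewise a b) p (a p) (b p) (ha p) (hb p))).2
      have e : Function.update (s.piecewise a b) p (b p) = s.piecewise a b := by
        apply Function.update_eq_self_iff.2
        simp [hp]
      rw [e] at h
      linarith
  simpa using key Finset.univ

/-- threshold indicator -/
def ut (a x : ℝ) : ℝ := if x < a then 1 else 0

lemma ut_meas (a : ℝ) : Measurable (ut a) :=
  Measurable.ite measurableSet_Iio measurable_const measurable_const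

lemma ut_cases (a x : ℝ) : ut a x = 0 ∨ ut a x = 1 := by
  unfold ut; split_ifs <;> simp

lemma ut_abs_int (a b M : ℝ) : IntegrableOn (fun x => |ut a x - ut b x|) (Set.Icc 0 M) := by
  have : IsFiniteMeasure (volume.restrict (Set.Icc (0:ℝ) M)) := by
    constructor; rw [Measure.restrict_apply_univ]; exact measure_Icc_lt_top
  refine Integrable.of_bound (C := 1) (((ut_meas a).sub (ut_meas b)).abs).aestronglyMeasurable ?_
  refine Filter.Eventually.of_forall fun x => ?_
  rw [Real.norm_eq_abs, abs_abs]
  rcases ut_cases a x with h | h <;> rcases ut_cases b x with h' | h' <;> rw [h, h'] <;> norm_num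

lemma ut_integral {a b M : ℝ} (ha : a ∈ Set.Icc 0 M) (hb : b ∈ Set.Icc 0 M) :
    ∫ x in Set.Icc 0 M, |ut a x - ut b x| = |a - b| := by
  wlog hab : a ≤ b generalizing a b
  · have := this hb ha (le_of_not_ge hab)
    rw [abs_sub_comm a b, ← this]
    congr 1; funext x; rw [abs_sub_comm]
  have e : (fun x => |ut a x - ut b x|) = (Set.Ico a b).indicator (fun _ => (1:ℝ)) := by
    funext x
    unfold ut
    by_cases h1 : x < a
    · have h2 : x < b := by linarith
      have : x ∉ Set.Ico a b := fun h => by linarith [h.1]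
      rw [Set.indicator_of_notMem this]; simp [h1, h2]
    · by_cases h2 : x < b
      · have : x ∈ Set.Ico a b := ⟨not_lt.1 h1, h2⟩
        rw [Set.indicator_of_mem this]; simp [h1, h2]
      · have : x ∉ Set.Ico a b := fun h => h2 h.2
        rw [Set.indicator_of_notMem this]; simp [h1, h2]
  have hs : Set.Ico a b ⊆ Set.Icc 0 M := fun x hx => ⟨ha.1.trans hx.1, hx.2.le.trans hb.2⟩
  rw [e, integral_indicator_const _ measurableSet_Ico, measureReal_restrict_apply measurableSet_Ico,
    Set.inter_eq_left.2 hs, Real.volume_real_Ico_of_le hab,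
    abs_of_nonpos (by linarith)]
  simp

lemma sorted_ut {n : ℕ} {a b : Fin n → ℝ} (ha : Monotone a) (hb : Monotone b) (x : ℝ) :
    ∑ i, |ut (a i) x - ut (b i) x| = |∑ i, ut (a i) x - ∑ i, ut (b i) x| := by
  rw [← Finset.sum_sub_distrib]
  have hm : ∀ {c : Fin n → ℝ}, Monotone c → ∀ i j, i ≤ j → ut (c i) x = 1 → ut (c j) x = 1 := by
    intro c hc i j hij h
    unfold ut at *
    have := hc hij
    by_cases h1 : x < c i
    · rw [if_pos (by linarith)]
    · rw [if_neg h1] at h; norm_num at h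
  by_cases h : ∀ i, ut (a i) x ≤ ut (b i) x
  · rw [abs_of_nonpos (Finset.sum_nonpos fun i _ => by linarith [h i]), ← Finset.sum_neg_distrib]
    exact Finset.sum_congr rfl fun i _ => abs_of_nonpos (by linarith [h i])
  · push Not at h
    obtain ⟨i, hi⟩ := h
    have hai : ut (a i) x = 1 := by
      rcases ut_cases (a i) x with h | h <;> rcases ut_cases (b i) x with h' | h' <;> rw [h, h'] at hi <;>
        first | exact h | (norm_num at hi)
    have hbi : ut (b i) x = 0 := by
      rcases ut_cases (b i) x with h' | h'
      · exact h'
      · rw [hai, h'] at hi; norm_num at hi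
    have hge : ∀ j, ut (b j) x ≤ ut (a j) x := by
      intro j
      rcases le_total i j with hij | hij
      · rw [hm ha i j hij hai]
        rcases ut_cases (b j) x with h | h <;> rw [h] <;> norm_num
      · have : ut (b j) x = 0 := by
          rcases ut_cases (b j) x with h | h
          · exact h
          · rw [hm hb j i hij h] at hbi; norm_num at hbi
        rw [this]
        rcases ut_cases (a j) x with h | h <;> rw [h] ; norm_num
    rw [abs_of_nonneg (Finset.sum_nonneg fun i _ => by linarith [hge i])]
    exact Finset.sum_congr rfl fun i _ => abs_of_nonneg (by linarith [hge i])

lemma sort_bound {n : ℕ} {L M : ℝ} (F : (Fin n → ℝ) → ℝ) 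
    (H2 : ∀ (r : Fin n → ℝ) p x y, 0 ≤ x → 0 ≤ y →
      |F (Function.update r p x) - F (Function.update r p y)| ≤ L * |x - y|)
    (H3 : ∀ (r : Fin n → ℝ) (σ : Equiv.Perm (Fin n)), F (r ∘ σ) = F r)
    (a b : Fin n → ℝ) (ha : ∀ i, a i ∈ Set.Icc 0 M) (hb : ∀ i, b i ∈ Set.Icc 0 M) :
    F a - F b ≤ L * ∫ x in Set.Icc 0 M, |∑ i, ut (a i) x - ∑ i, ut (b i) x| := by
  have h := lip_bound F H2 (a ∘ Tuple.sort a) (b ∘ Tuple.sort b) (fun i => (ha _).1) (fun i => (hb _).1)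
  rw [H3, H3] at h
  convert h using 2
  simp only [Function.comp]
  rw [← Finset.sum_congr rfl fun i _ => ut_integral (ha (Tuple.sort a i)) (hb (Tuple.sort b i)),
    ← integral_finsetSum _ fun i _ => ut_abs_int _ _ _]
  congr 1
  funext x
  have := sorted_ut (Tuple.monotone_sort a) (Tuple.monotone_sort b) x
  simp only [Function.comp] at this
  rw [this, Equiv.sum_comp (Tuple.sort a) (fun i => ut (a i) x), Equiv.sum_comp (Tuple.sort b) (fun i => ut (b i) x)]

lemma second_moment {n : ℕ} (hn : 0 < n) (c : Fin n → ℝ) (hc : ∑ i, c i = 0) (s : Finset (Fin n)) :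
    ∑ τ : Fin n → Fin n, (∑ i ∈ s, c (τ i)) ^ 2 =
      Fintype.card (Fin n → Fin n) * (s.card * ((∑ i, c i ^ 2) / n)) := by
  have hn' : (0 : ℝ) < n := by exact_mod_cast hn
  induction s using Finset.induction_on with
  | empty => simp
  | insert p s hp ih =>
    have h := fin_resample p (fun τ : Fin n → Fin n => (∑ i ∈ insert p s, c (τ i)) ^ 2)
    have h2 : ∀ τ : Fin n → Fin n, ∑ a : Fin n,
        (∑ i ∈ insert p s, c (Function.update τ p a i)) ^ 2 =
        ∑ i, c i ^ 2 + n * (∑ i ∈ s, c (τ i)) ^ 2 := by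
      intro τ
      have e : ∀ a, ∑ i ∈ insert p s, c (Function.update τ p a i) = c a + ∑ i ∈ s, c (τ i) := by
        intro a
        rw [Finset.sum_insert hp, Function.update_self]
        congr 1
        refine Finset.sum_congr rfl fun i hi => ?_
        rw [Function.update_of_ne]
        rintro rfl; exact hp hi
      simp only [e, add_sq, Finset.sum_add_distrib, ← Finset.sum_mul, ← Finset.mul_sum, hc]
      simp
    simp only [h2] at h
    rw [Finset.sum_add_distrib, ← Finset.mul_sum, ih] at h
    rw [Finset.card_insert_of_notMem hp]
    simp only [Finset.sum_const, Finset.card_univ, nsmul_eq_mul, Fintype.card_fin] at h ⊢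
    have := mul_left_cancel₀ hn'.ne' (h.trans (b := _) (c := (n:ℝ) *
      (Fintype.card (Fin n → Fin n) * (((s.card + 1 : ℕ) : ℝ) * ((∑ i, c i ^ 2) / n)))) (by
        push_cast
        field_simp
        ring))
    exact this

lemma avg_dev {n : ℕ} (hn : 0 < n) (r : Fin n → ℝ) (t x : ℝ) {l : ℝ} (hl : 0 < l) :
    ∑ τ : Fin n → Fin n, |∑ i, ut (r i) x - ∑ i, ut (r (τ i)) x| ≤
      Fintype.card (Fin n → Fin n) * (1 / (2 * l) + l / 2 * ∑ i, |ut (r i) x - ut t x|) := by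
  have hn' : (0 : ℝ) < n := by exact_mod_cast hn
  set b := (∑ i, ut (r i) x) / n with hb
  have hsum : ∑ i, ut (r i) x = n * b := by rw [hb]; field_simp
  let c : Fin n → ℝ := fun i => ut (r i) x - b
  have hc : ∑ i, c i = 0 := by simp [c, Finset.sum_sub_distrib, hsum]
  have hX : ∀ τ : Fin n → Fin n, ∑ i, ut (r i) x - ∑ i, ut (r (τ i)) x = - ∑ i, c (τ i) := by
    intro τ
    simp [c, Finset.sum_sub_distrib, hsum]
  have hsm := second_moment hn c hc Finset.univ
  have hcb : ∑ i, c i ^ 2 ≤ ∑ i, |ut (r i) x - ut t x| := by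
    have e1 : ∑ i, |ut (r i) x - ut t x| = ∑ i, (ut (r i) x - ut t x) ^ 2 := by
      refine Finset.sum_congr rfl fun i _ => ?_
      rcases ut_cases (r i) x with h | h <;> rcases ut_cases t x with h' | h' <;> rw [h, h'] <;> norm_num
    have e2 : ∑ i, (ut (r i) x - ut t x) ^ 2 = ∑ i, c i ^ 2 + n * (b - ut t x) ^ 2 := by
      have : ∀ i, (ut (r i) x - ut t x) ^ 2 = c i ^ 2 + (2 * (b - ut t x)) * c i + (b - ut t x) ^ 2 := by
        intro i; simp only [c]; ring
      simp only [this, Finset.sum_add_distrib, ← Finset.mul_sum, hc]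
      simp
    rw [e1, e2]
    have : 0 ≤ n * (b - ut t x) ^ 2 := by positivity
    linarith
  calc _ ≤ ∑ τ : Fin n → Fin n, (1 / (2 * l) + l / 2 * (∑ i, c (τ i)) ^ 2) := by
        refine Finset.sum_le_sum fun τ _ => ?_
        rw [hX, abs_neg]
        set Y := ∑ i, c (τ i)
        rw [← sq_abs Y]
        have : 0 ≤ (l * |Y| - 1) ^ 2 / (2 * l) := by positivity
        have e : (l * |Y| - 1) ^ 2 / (2 * l) = 1 / (2 * l) + l / 2 * |Y| ^ 2 - |Y| := by
          field_simp; ring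
        linarith
    _ = Fintype.card (Fin n → Fin n) * (1 / (2 * l) + l / 2 * ∑ i, c i ^ 2) := by
        rw [Finset.sum_add_distrib, ← Finset.mul_sum, hsm]
        simp only [Finset.sum_const, Finset.card_univ, nsmul_eq_mul, Fintype.card_fin]
        field_simp
    _ ≤ _ := by gcongr

lemma abstract_bound {n : ℕ} (hn : 0 < n) {L M g : ℝ} (hL : 0 ≤ L) (hM : 0 ≤ M) {r : Fin n → ℝ}
    (hr : ∀ i, r i ∈ Set.Icc 0 M) (F : (Fin n → ℝ) → ℝ)
    (H1 : ∀ r0 : Fin n → ℝ, (∀ i, r0 i ∈ Set.Icc 0 M) → ∀ p,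
      g ≤ gap r (fun x => F (Function.update r0 p x)))
    (H2 : ∀ (r : Fin n → ℝ) p x y, 0 ≤ x → 0 ≤ y →
      |F (Function.update r p x) - F (Function.update r p y)| ≤ L * |x - y|)
    (H3 : ∀ (r : Fin n → ℝ) (σ : Equiv.Perm (Fin n)), F (r ∘ σ) = F r) {l : ℝ} (hl : 0 < l) :
    F r ≤ F (fun _ => (∑ j, r j) / n) - n * g +
      L * (M / (2 * l) + l / 2 * ∑ i, |r i - (∑ j, r j) / n|) := by
  have hrb := rbar_mem hn hr
  have h1 := path_bound hn hr F H1 Finset.univ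
  simp only [Finset.mem_univ, if_true, Finset.card_univ, Fintype.card_fin] at h1
  set b := (∑ j, r j) / n with hb
  set N : ℝ := (Fintype.card (Fin n → Fin n) : ℝ) with hN
  have hNpos : 0 < N := by
    have : Nonempty (Fin n → Fin n) := ⟨id⟩
    rw [hN]; exact_mod_cast Fintype.card_pos
  have hint : ∀ τ : Fin n → Fin n, IntegrableOn
      (fun x => |∑ i, ut (r i) x - ∑ i, ut (r (τ i)) x|) (Set.Icc 0 M) := by
    intro τ
    have : IsFiniteMeasure (volume.restrict (Set.Icc (0:ℝ) M)) := by
      constructor; rw [Measure.restrict_apply_univ]; exact measure_Icc_lt_top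
    refine Integrable.abs (Integrable.sub (integrable_finsetSum _ fun i _ => ?_)
      (integrable_finsetSum _ fun i _ => ?_))
    all_goals
      refine Integrable.of_bound (C := 1) (ut_meas _).aestronglyMeasurable ?_
      refine Filter.Eventually.of_forall fun x => ?_
      rcases ut_cases (r i) x with h | h <;> rcases ut_cases (r (τ i)) x with h' | h' <;>
        first | rw [h] | rw [h']
      all_goals norm_num [h, h']
  have h2 : ∑ τ : Fin n → Fin n, (F r - F (fun i => r (τ i))) ≤
      L * (N * (M / (2 * l) + l / 2 * ∑ i, |r i - b|)) := by
    calc _ ≤ ∑ τ : Fin n → Fin n, L * ∫ x in Set.Icc 0 M, |∑ i, ut (r i) x - ∑ i, ut (r (τ i)) x| :=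
          Finset.sum_le_sum fun τ _ => sort_bound F H2 H3 r _ hr (fun i => hr _)
      _ = L * ∫ x in Set.Icc 0 M, ∑ τ : Fin n → Fin n, |∑ i, ut (r i) x - ∑ i, ut (r (τ i)) x| := by
          rw [← Finset.mul_sum, integral_finsetSum _ fun τ _ => hint τ]
      _ ≤ L * ∫ x in Set.Icc 0 M, N * (1 / (2 * l) + l / 2 * ∑ i, |ut (r i) x - ut b x|) := by
          refine mul_le_mul_of_nonneg_left ?_ hL
          refine integral_mono (integrable_finsetSum _ fun τ _ => hint τ) ?_ (fun x => avg_dev hn r b x hl)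
          have : IsFiniteMeasure (volume.restrict (Set.Icc (0:ℝ) M)) := by
            constructor; rw [Measure.restrict_apply_univ]; exact measure_Icc_lt_top
          exact ((integrable_const _).add ((integrable_finsetSum _ fun i _ =>
            ut_abs_int (r i) b M).const_mul _)).const_mul _
      _ = _ := by
          have : IsFiniteMeasure (volume.restrict (Set.Icc (0:ℝ) M)) := by
            constructor; rw [Measure.restrict_apply_univ]; exact measure_Icc_lt_top
          rw [integral_const_mul, integral_add (integrable_const _) ((integrable_finsetSum _ fun i _ =>
            ut_abs_int (r i) b M).const_mul _), integral_const_mul, integral_finsetSum _ fun i _ =>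
            ut_abs_int (r i) b M, setIntegral_const, Real.volume_real_Icc_of_le hM,
            Finset.sum_congr rfl fun i _ => ut_integral (hr i) hrb, smul_eq_mul]
          congr 3
          ring
  rw [Finset.sum_sub_distrib] at h2
  simp only [Finset.sum_const, Finset.card_univ, nsmul_eq_mul] at h2
  rw [← hN] at h2
  refine le_of_mul_le_mul_left ?_ hNpos
  linarith


end


lemma core_bound {k n m : ℕ} (hk : 1 ≤ k) (hn : 0 < n) {β M : ℝ} (hβ : 0 < β) (hM : 0 < M)
    (hm : (m : ℝ) = β * n) (hm2 : 2 ≤ m) {r : Fin n → ℝ}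
    (hr : ∀ i, r i ∈ Set.Icc 0 M) (hρ8 : rad k n M ≤ 1/8)
    (hsm : 4 ^ k * M / n * Vk k ≤ 1/2) {c L T : ℝ}
    (hc : c = β ^ 2 * Vk k ^ 2 * ((1 / 2) ^ k * Real.exp (-(2 * (4 ^ k * M * Vk k) * (1 + β)))) / 8)
    (hL : L = β * Vk k) (hT : T = (∑ i, |r i - (∑ j, r j) / n|) / n) (hT0 : 0 < T)
    (hbig : L ^ 2 * M / c ^ 2 < n * T ^ 3) :
    muU k n m r < muU k n m (fun _ : Fin n => (∑ j, r j) / n) := by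
  have hn' : (0 : ℝ) < n := by exact_mod_cast hn
  have hV := Vk_pos k
  have hLpos : 0 < L := by rw [hL]; positivity
  have hcpos : 0 < c := by rw [hc]; positivity
  have hp0 : p0 k n m M = (1 / 2) ^ k * Real.exp (-(2 * (4 ^ k * M * Vk k) * (1 + β))) := by
    unfold p0
    rw [hm, mul_div_assoc, div_self hn'.ne', mul_one]
  have H1 : ∀ r0 : Fin n → ℝ, (∀ i, r0 i ∈ Set.Icc 0 M) → ∀ p,
      c * T ^ 2 ≤ gap r (fun x => muU k n m (Function.update r0 p x)) := by
    intro r0 hr0 p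
    refine le_trans ?_ (muU_gap hk hn hM.le hr0 hr hρ8 hsm hm2 p)
    have hv := var_ge hn r
    rw [← hT] at hv
    have e : (m : ℝ) ^ 2 / 4 * p0 k n m M * kap k r =
        c * ((∑ i, r i ^ 2) / n - ((∑ i, r i) / n) ^ 2) := by
      unfold kap
      rw [hc, ← hp0, hm]
      field_simp
      ring
    rw [e]
    gcongr
  have H2 : ∀ (r : Fin n → ℝ) p x y, 0 ≤ x → 0 ≤ y →
      |muU k n m (Function.update r p x) - muU k n m (Function.update r p y)| ≤ L * |x - y| := by
    intro r p x y hx hy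
    have h := muU_lip1 (k := k) (m := m) hk r p hx hy
    have e : (m : ℝ) * (Vk k / n) = L := by rw [hm, hL]; field_simp
    rwa [e] at h
  have hl : 0 < c * T / L := by positivity
  have h := abstract_bound hn hLpos.le hM.le hr (muU k n m) H1 H2 (fun r σ => muU_perm r σ) hl
  have hTs : ∑ i, |r i - (∑ j, r j) / n| = n * T := by rw [hT, mul_div_cancel₀ _ hn'.ne']
  rw [hTs] at h
  rw [div_lt_iff₀ (by positivity)] at hbig
  have e : L * (M / (2 * (c * T / L)) + c * T / L / 2 * (n * T)) =
      L ^ 2 * M / (2 * (c * T)) + c * n * T ^ 2 / 2 := by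
    field_simp
  have h5 : L ^ 2 * M / (2 * (c * T)) < c * n * T ^ 2 / 2 := by
    rw [div_lt_iff₀ (by positivity)]
    nlinarith
  rw [e] at h
  linarith

/-- **Uniform allocation dominates.**
Fix `k ≥ 1`, a demand-to-supply ratio `β > 0` and `M ≥ max {1, 1/β}`. Given a
service-range vector `r ∈ [0,M]^n`, let `r̄` be the uniform allocation with value
`‖r‖₁/n`. There exist `C > 0` depending only on `β`, `M` (and `k`) and an integer `N`
such that for all `n ≥ N` with `m = βn`: if `‖r - r̄‖₁ > θ n` where
`θ > C (log n / n)^{1/3}` in the case `k = 1`, or `θ > C n^{-1/(4(k+1))}` in the case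
`k ≥ 2`, then `μ_m(r̄) > μ_m(r)`. -/
theorem uniform_allocation_dominates (k : ℕ) (hk : 1 ≤ k)
    (β M : ℝ) (hβ : 0 < β) (hM : max 1 β⁻¹ ≤ M) :
    ∃ C : ℝ, 0 < C ∧ ∃ N : ℕ, ∀ n : ℕ, N ≤ n → ∀ m : ℕ, (m : ℝ) = β * n →
      ∀ r : Fin n → ℝ, (∀ i, r i ∈ Set.Icc (0 : ℝ) M) →
        ∀ θ : ℝ,
          (if k = 1 then C * (Real.log n / n) ^ ((1 : ℝ) / 3) < θ
            else C * (n : ℝ) ^ (-(1 : ℝ) / (4 * ((k : ℝ) + 1))) < θ) →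
          θ * n < ∑ i, |r i - (∑ j, r j) / n| →
          muU k n m r < muU k n m (fun _ : Fin n => (∑ j, r j) / n) := by
  have hM0 : 0 < M := lt_of_lt_of_le one_pos ((le_max_left _ _).trans hM)
  have hV := Vk_pos k
  obtain ⟨c, hc⟩ : ∃ c, c = β ^ 2 * Vk k ^ 2 *
    ((1 / 2) ^ k * Real.exp (-(2 * (4 ^ k * M * Vk k) * (1 + β)))) / 8 := ⟨_, rfl⟩
  obtain ⟨L, hL⟩ : ∃ L, L = β * Vk k := ⟨_, rfl⟩
  have hcpos : 0 < c := by rw [hc]; positivity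
  have hLpos : 0 < L := by rw [hL]; positivity
  have hA : 0 < L ^ 2 * M / c ^ 2 := by positivity
  set A := L ^ 2 * M / c ^ 2 with hAdef
  refine ⟨A + 1, by linarith, max (max 3 ⌈2 / β⌉₊) (max ⌈8 ^ k * M⌉₊ ⌈2 * (4 ^ k * M * Vk k)⌉₊), ?_⟩
  intro n hN m hm r hr θ hθ hdev
  have hn3 : 3 ≤ n := ((le_max_left _ _).trans (le_max_left _ _)).trans hN
  have hn2 : 2 / β ≤ n := Nat.ceil_le.1 (((le_max_right _ _).trans (le_max_left _ _)).trans hN)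
  have hn8 : 8 ^ k * M ≤ n := Nat.ceil_le.1 (((le_max_left _ _).trans (le_max_right _ _)).trans hN)
  have hn4 : 2 * (4 ^ k * M * Vk k) ≤ n :=
    Nat.ceil_le.1 (((le_max_right _ _).trans (le_max_right _ _)).trans hN)
  have hn : 0 < n := by omega
  have hn' : (0 : ℝ) < n := by exact_mod_cast hn
  have hn3' : (3 : ℝ) ≤ n := by exact_mod_cast hn3
  have hm2 : 2 ≤ m := by
    rw [div_le_iff₀ hβ] at hn2
    have : (2 : ℝ) ≤ m := by linarith
    exact_mod_cast this
  have hρ8 : rad k n M ≤ 1/8 := by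
    refine le_of_pow_le_pow_left₀ (n := k) (by omega) (by norm_num) ?_
    rw [rad_pow hk hM0.le, div_le_iff₀ hn', one_div, inv_pow, inv_mul_eq_div, le_div_iff₀ (by positivity)]
    linarith
  have hsm : 4 ^ k * M / n * Vk k ≤ 1/2 := by
    rw [div_mul_eq_mul_div, div_le_iff₀ hn']
    linarith
  have hrate : ∃ x : ℝ, 0 ≤ x ∧ 1 ≤ n * x ^ 3 ∧ (A + 1) * x < θ := by
    by_cases h1 : k = 1
    · rw [if_pos h1] at hθ
      have hlog : 1 ≤ Real.log n := by
        rw [Real.le_log_iff_exp_le hn']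
        have := Real.exp_one_lt_d9
        linarith
      refine ⟨_, by positivity, ?_, hθ⟩
      rw [← Real.rpow_natCast, ← Real.rpow_mul (by positivity)]
      norm_num
      rw [mul_div_cancel₀ _ hn'.ne']
      exact hlog
    · rw [if_neg h1] at hθ
      refine ⟨_, by positivity, ?_, hθ⟩
      rw [← Real.rpow_natCast, ← Real.rpow_mul hn'.le]
      nth_rewrite 1 [← Real.rpow_one (n : ℝ)]
      rw [← Real.rpow_add hn']
      apply Real.one_le_rpow (by linarith)
      have hk1 : (1 : ℝ) ≤ k := by exact_mod_cast hk
      have : -1 / (4 * ((k : ℝ) + 1)) * ((3 : ℕ) : ℝ) = -(3 / (4 * ((k : ℝ) + 1))) := by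
        push_cast; ring
      rw [this]
      have : 3 / (4 * ((k : ℝ) + 1)) ≤ 1 := by
        rw [div_le_one (by positivity)]; linarith
      linarith
  obtain ⟨x, hx0, hx1, hx2⟩ := hrate
  have hTθ : θ < (∑ i, |r i - (∑ j, r j) / n|) / n := by rwa [lt_div_iff₀ hn']
  have hlt : (A + 1) * x < (∑ i, |r i - (∑ j, r j) / n|) / n := hx2.trans hTθ
  have hAx : 0 ≤ (A + 1) * x := by positivity
  refine core_bound hk hn hβ hM0 hm hm2 hr hρ8 hsm hc hL rfl (lt_of_le_of_lt hAx hlt) ?_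
  have h3 : ((A + 1) * x) ^ 3 < ((∑ i, |r i - (∑ j, r j) / n|) / n) ^ 3 :=
    pow_lt_pow_left₀ hlt hAx (by norm_num)
  have h4 : A < (A + 1) ^ 3 := by nlinarith [sq_nonneg A]
  calc A < (A + 1) ^ 3 := h4
    _ ≤ (A + 1) ^ 3 * (n * x ^ 3) := le_mul_of_one_le_right (by positivity) hx1
    _ = n * ((A + 1) * x) ^ 3 := by ring
    _ ≤ _ := by gcongr

end
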